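/- arXiv:1309.2846 — 4 statements merged into one kernel-verified Lean document; each statement's English description precedes it below -/
import Mathlib

section
/- Let n be a positive integer, let α be a weak composition of n, let a > 0 be any scaling factor, and let f : [0,∞) → [0,∞) be a right-continuous, weakly decreasing function with f(x) → 0 as x → ∞. Then sup_{x≥0} |∂^a(ord α)(x) − f(x)| ≤ sup_{x≥0} |∂^a α(x) − f(x)|, i.e., sorting the parts of the composition in weakly decreasing order does not increase the sup-norm distance of the rescaled boundary function to f. -/
open Filter

/-- The `a`-rescaled diagram-boundary function of a sequence of pile sizes
`l : ℕ → ℕ` (0-indexed: `l k` is the `(k+1)`-st part), for a total of `n` cards: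
`∂ᵃl(x) = (a/n) · l_{⌊ax⌋+1}`. -/
noncomputable def rescaledBoundary (n : ℕ) (a : ℝ) (l : ℕ → ℕ) (x : ℝ) : ℝ :=
  (a / n) * l ⌊a * x⌋₊

/-- The decreasing rearrangement (`ord`) of a finitely supported sequence:
`ordC l k` is the `(k+1)`-st largest value among the parts of `l`, i.e. the
largest `m` such that at least `k+1` parts of `l` are `≥ m`. -/
noncomputable def ordC (l : ℕ → ℕ) (k : ℕ) : ℕ :=
  sSup {m : ℕ | ∃ s : Finset ℕ, s.card = k + 1 ∧ ∀ i ∈ s, m ≤ l i}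

theorem ordC_aux_bdd (α : ℕ → ℕ) (C : ℕ) (hC : ∀ i, α i ≤ C) (k : ℕ) :
    BddAbove {m : ℕ | ∃ s : Finset ℕ, s.card = k + 1 ∧ ∀ i ∈ s, m ≤ α i} := by
  refine ⟨C, ?_⟩
  rintro m ⟨s, hs, h⟩
  obtain ⟨i, hi⟩ : s.Nonempty := Finset.card_pos.mp (by omega)
  exact (h i hi).trans (hC i)

theorem ordC_aux_upper (α : ℕ → ℕ) (C : ℕ) (hC : ∀ i, α i ≤ C) (k : ℕ) :
    ∃ i, k ≤ i ∧ ordC α k ≤ α i := by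
  have hmem := Nat.sSup_mem (s := {m : ℕ | ∃ s : Finset ℕ, s.card = k + 1 ∧ ∀ i ∈ s, m ≤ α i})
    ⟨0, Finset.range (k + 1), by simp, by simp⟩ (ordC_aux_bdd α C hC k)
  obtain ⟨s, hs, h⟩ := hmem
  by_contra hcon
  have hsub : s ⊆ Finset.range k := by
    intro i hi
    rw [Finset.mem_range]
    by_contra hik
    exact hcon ⟨i, by omega, h i hi⟩
  have := Finset.card_le_card hsub
  rw [Finset.card_range] at this
  omega

theorem ordC_aux_lower (α : ℕ → ℕ) (C : ℕ) (hC : ∀ i, α i ≤ C) (k : ℕ) :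
    ∃ i, i ≤ k ∧ α i ≤ ordC α k := by
  by_contra hcon
  have hle : ordC α k + 1 ≤ ordC α k := by
    refine le_csSup (ordC_aux_bdd α C hC k) ⟨Finset.range (k + 1), by simp, ?_⟩
    intro i hi
    rw [Finset.mem_range] at hi
    by_contra h
    exact hcon ⟨i, by omega, by omega⟩
  omega

theorem sorting_decreases_sup_distance
    (n : ℕ) (hn : 0 < n) (α : ℕ → ℕ)
    (hfin : (Function.support α).Finite) (hsum : ∑ᶠ i, α i = n)
    (a : ℝ) (ha : 0 < a)
    (f : ℝ → ℝ)
    (hf_nonneg : ∀ x : ℝ, 0 ≤ x → 0 ≤ f x)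
    (hf_anti : AntitoneOn f (Set.Ici 0))
    (hf_rc : ∀ x : ℝ, 0 ≤ x → ContinuousWithinAt f (Set.Ici x) x)
    (hf_lim : Tendsto f atTop (nhds 0)) :
    (⨆ x : NNReal, |rescaledBoundary n a (ordC α) x - f x|) ≤
      ⨆ x : NNReal, |rescaledBoundary n a α x - f x| := by
  obtain ⟨C, hC⟩ : ∃ C, ∀ i, α i ≤ C := by
    refine ⟨hfin.toFinset.sup α, fun i => ?_⟩
    by_cases h : α i = 0
    · omega
    · exact Finset.le_sup (f := α) (by simpa using h)
  have hc : 0 < a / (n : ℝ) := by positivity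
  have hbdd : BddAbove (Set.range fun x : NNReal => |rescaledBoundary n a α x - f x|) := by
    refine ⟨a / n * C + f 0, ?_⟩
    rintro _ ⟨x, rfl⟩
    have h0 := hf_nonneg x x.2
    have h1 : f x ≤ f 0 := hf_anti (Set.mem_Ici.mpr le_rfl) (Set.mem_Ici.mpr x.2) x.2
    have h2 : a / (n : ℝ) * (α ⌊a * (x : ℝ)⌋₊ : ℝ) ≤ a / n * C :=
      mul_le_mul_of_nonneg_left (by exact_mod_cast hC _) hc.le
    have h3 : 0 ≤ a / (n : ℝ) * (α ⌊a * (x : ℝ)⌋₊ : ℝ) := by positivity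
    simp only [rescaledBoundary]
    rw [abs_le]
    constructor <;> linarith
  have key : ∀ y : ℝ, 0 ≤ y → |rescaledBoundary n a α y - f y| ≤
      ⨆ x : NNReal, |rescaledBoundary n a α x - f x| :=
    fun y hy => le_ciSup hbdd (⟨y, hy⟩ : NNReal)
  refine ciSup_le fun x => ?_
  have hx : (0 : ℝ) ≤ x := x.2
  have hax : 0 ≤ a * (x : ℝ) := by positivity
  have hk1 := Nat.floor_le hax
  have hk2 := Nat.lt_floor_add_one (a * (x : ℝ))
  have hfl : ∀ i : ℕ, ∃ y : ℝ, y = x + ((i : ℝ) - ⌊a * (x : ℝ)⌋₊) / a ∧ 0 ≤ y ∧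
      ⌊a * y⌋₊ = i := by
    intro i
    have hy : a * (x + ((i : ℝ) - ⌊a * (x : ℝ)⌋₊) / a) = a * x + (i - ⌊a * (x : ℝ)⌋₊) := by
      field_simp
    have hi : (0 : ℝ) ≤ i := by positivity
    have hpos : 0 ≤ a * (x + ((i : ℝ) - ⌊a * (x : ℝ)⌋₊) / a) := by rw [hy]; linarith
    refine ⟨_, rfl, nonneg_of_mul_nonneg_right hpos ha, ?_⟩
    rw [Nat.floor_eq_iff hpos, hy]
    constructor <;> linarith
  rw [abs_le]
  constructor
  · obtain ⟨i, hik, hi⟩ := ordC_aux_lower α C hC ⌊a * (x : ℝ)⌋₊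
    obtain ⟨y, hy, hy0, hyf⟩ := hfl i
    have hyx : y ≤ x := by
      have : ((i : ℝ) - ⌊a * (x : ℝ)⌋₊) / a ≤ 0 :=
        div_nonpos_of_nonpos_of_nonneg (by
          have : (i : ℝ) ≤ ⌊a * (x : ℝ)⌋₊ := by exact_mod_cast hik
          linarith) ha.le
      linarith
    have h1 := (abs_le.mp (key y hy0)).1
    have h2 := hf_anti (Set.mem_Ici.mpr hy0) (Set.mem_Ici.mpr hx) hyx
    have h3 : a / (n : ℝ) * (α i : ℝ) ≤ a / n * (ordC α ⌊a * (x : ℝ)⌋₊ : ℝ) :=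
      mul_le_mul_of_nonneg_left (by exact_mod_cast hi) hc.le
    have h4 : rescaledBoundary n a α y = a / n * α i := by rw [rescaledBoundary, hyf]
    have h5 : rescaledBoundary n a (ordC α) x = a / n * (ordC α ⌊a * (x : ℝ)⌋₊ : ℝ) := rfl
    linarith
  · obtain ⟨i, hik, hi⟩ := ordC_aux_upper α C hC ⌊a * (x : ℝ)⌋₊
    obtain ⟨y, hy, hy0, hyf⟩ := hfl i
    have hyx : (x : ℝ) ≤ y := by
      have : 0 ≤ ((i : ℝ) - ⌊a * (x : ℝ)⌋₊) / a :=
        div_nonneg (by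
          have : (⌊a * (x : ℝ)⌋₊ : ℝ) ≤ i := by exact_mod_cast hik
          linarith) ha.le
      linarith
    have h1 := (abs_le.mp (key y hy0)).2
    have h2 := hf_anti (Set.mem_Ici.mpr hx) (Set.mem_Ici.mpr hy0) hyx
    have h3 : a / (n : ℝ) * (ordC α ⌊a * (x : ℝ)⌋₊ : ℝ) ≤ a / (n : ℝ) * (α i : ℝ) :=
      mul_le_mul_of_nonneg_left (by exact_mod_cast hi) hc.le
    have h4 : rescaledBoundary n a α y = a / n * α i := by rw [rescaledBoundary, hyf]
    have h5 : rescaledBoundary n a (ordC α) x = a / n * (ordC α ⌊a * (x : ℝ)⌋₊ : ℝ) := rfl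
    linarith
end

section
/- For each positive integer n let ρ^(n) be a probability distribution on the set W(n) of weak compositions of n, and let ν^(n) be the probability distribution on the set P(n) of integer partitions of n defined by ν^(n)(λ) = Σ_{α ∈ W(n), ord α = λ} ρ^(n)(α). Let φ : [0,∞) → [0,∞) be a right-continuous, weakly decreasing function with φ(x) → 0 as x → ∞, and let (a_n) be a sequence of positive scaling factors. If for every ε > 0 one has ρ^(n){α ∈ W(n) : sup_{x≥0} |∂^{a_n} α(x) − φ(x)| < ε} → 1 as n → ∞, then for every ε > 0 one also has ν^(n){λ ∈ P(n) : sup_{x≥0} |∂^{a_n} λ(x) − φ(x)| < ε} → 1 as n → ∞. -/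
open Filter

/-- `l : ℕ → ℕ` is a weak composition of `n`: finitely many nonzero parts, summing to `n`. -/
def IsWeakCompOf (n : ℕ) (l : ℕ → ℕ) : Prop :=
  (Function.support l).Finite ∧ ∑ᶠ i, l i = n

/-- `l : ℕ → ℕ` is an integer partition of `n` (weakly decreasing weak composition). -/
def IsPartitionOf (n : ℕ) (l : ℕ → ℕ) : Prop :=
  IsWeakCompOf n l ∧ Antitone l

theorem ordC_set_bdd (l : ℕ → ℕ) (M : ℕ) (hM : ∀ i, l i ≤ M) (k : ℕ) :
    BddAbove {m : ℕ | ∃ s : Finset ℕ, s.card = k + 1 ∧ ∀ i ∈ s, m ≤ l i} := by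
  refine ⟨M, ?_⟩
  rintro m ⟨s, hs, h⟩
  have : s.Nonempty := by
    rw [← Finset.card_pos]; omega
  obtain ⟨i, hi⟩ := this
  exact (h i hi).trans (hM i)

theorem ordC_mem (l : ℕ → ℕ) (M : ℕ) (hM : ∀ i, l i ≤ M) (k : ℕ) :
    ∃ s : Finset ℕ, s.card = k + 1 ∧ ∀ i ∈ s, ordC l k ≤ l i := by
  have := Nat.sSup_mem (s := {m : ℕ | ∃ s : Finset ℕ, s.card = k + 1 ∧ ∀ i ∈ s, m ≤ l i})
    ⟨0, Finset.range (k+1), by simp, by simp⟩ (ordC_set_bdd l M hM k)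
  exact this

theorem le_ordC (l : ℕ → ℕ) (M : ℕ) (hM : ∀ i, l i ≤ M) (k m : ℕ) (s : Finset ℕ)
    (hs : s.card = k + 1) (h : ∀ i ∈ s, m ≤ l i) : m ≤ ordC l k :=
  le_csSup (ordC_set_bdd l M hM k) ⟨s, hs, h⟩

theorem weak_bounds (n : ℕ) (l : ℕ → ℕ) (h : IsWeakCompOf n l) :
    (∃ M, ∀ i, l i ≤ M) ∧ ∃ N, ∀ i, N ≤ i → l i = 0 := by
  obtain ⟨hf, -⟩ := h
  refine ⟨⟨∑ i ∈ hf.toFinset, l i, fun i => ?_⟩, ?_⟩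
  · by_cases hi : l i = 0
    · omega
    · exact Finset.single_le_sum (f := l) (fun _ _ => Nat.zero_le _) (by simpa using hi)
  · obtain ⟨N, hN⟩ := hf.bddAbove
    refine ⟨N + 1, fun i hi => ?_⟩
    by_contra hne
    have := hN (show i ∈ Function.support l from hne)
    omega

theorem lt_ordC_iff (l : ℕ → ℕ) (M N : ℕ) (hM : ∀ i, l i ≤ M) (hN : ∀ i, N ≤ i → l i = 0)
    (k m : ℕ) : m < ordC l k ↔ k < ((Finset.range N).filter (fun i => m < l i)).card := by
  constructor
  · intro h
    obtain ⟨s, hs, h'⟩ := ordC_mem l M hM k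
    have : s ⊆ (Finset.range N).filter (fun i => m < l i) := by
      intro i hi
      have h1 := h' i hi
      simp only [Finset.mem_filter, Finset.mem_range]
      refine ⟨?_, by omega⟩
      by_contra hc
      have := hN i (by omega)
      omega
    have := Finset.card_le_card this
    omega
  · intro h
    obtain ⟨s, hs, hc⟩ := Finset.exists_subset_card_eq (Nat.succ_le_of_lt h)
    refine le_ordC l M hM k (m+1) s hc (fun i hi => ?_)
    have := hs hi
    simp only [Finset.mem_filter] at this
    exact this.2

theorem sum_layer (l : ℕ → ℕ) (M N : ℕ) (hM : ∀ i, l i ≤ M) :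
    ∑ i ∈ Finset.range N, l i
      = ∑ m ∈ Finset.range M, ((Finset.range N).filter (fun i => m < l i)).card := by
  have h : ∀ i, l i = ∑ m ∈ Finset.range M, if m < l i then 1 else 0 := by
    intro i
    rw [← Finset.card_filter]
    have : (Finset.range M).filter (fun m => m < l i) = Finset.range (l i) := by
      ext m
      have := hM i
      simp only [Finset.mem_filter, Finset.mem_range]
      omega
    rw [this, Finset.card_range]
  simp_rw [Finset.card_filter]
  rw [Finset.sum_comm]
  exact Finset.sum_congr rfl (fun i _ => h i)

theorem finsum_range (l : ℕ → ℕ) (N : ℕ) (hN : ∀ i, N ≤ i → l i = 0) :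
    ∑ᶠ i, l i = ∑ i ∈ Finset.range N, l i := by
  apply finsum_eq_sum_of_support_subset
  intro i hi
  simp only [Finset.coe_range, Set.mem_Iio]
  by_contra hc
  exact hi (hN i (by omega))

theorem ordC_isPartition (n : ℕ) (l : ℕ → ℕ) (h : IsWeakCompOf n l) :
    IsPartitionOf n (ordC l) := by
  obtain ⟨⟨M, hM⟩, ⟨N, hN⟩⟩ := weak_bounds n l h
  have key := lt_ordC_iff l M N hM hN
  have cardle : ∀ m, ((Finset.range N).filter (fun i => m < l i)).card ≤ N := fun m => by
    simpa using Finset.card_filter_le (Finset.range N) (fun i => m < l i)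
  have hN' : ∀ k, N ≤ k → ordC l k = 0 := by
    intro k hk
    by_contra hc
    have := (key k 0).1 (by omega)
    have := cardle 0
    omega
  have hM' : ∀ k, ordC l k ≤ M := by
    intro k
    by_contra hc
    have h1 := (key k M).1 (by omega)
    have h2 : (Finset.range N).filter (fun i => M < l i) = ∅ := by
      apply Finset.filter_false_of_mem
      intro i _
      have := hM i
      omega
    rw [h2] at h1
    simp at h1
  refine ⟨⟨?_, ?_⟩, ?_⟩
  · refine (Set.finite_lt_nat N).subset (fun k hk => ?_)
    by_contra hc
    exact hk (hN' k (by simpa using hc))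
  · rw [← h.2, finsum_range _ N hN', finsum_range _ N hN, sum_layer _ M N hM',
      sum_layer _ M N hM]
    refine Finset.sum_congr rfl (fun m _ => ?_)
    have : (Finset.range N).filter (fun k => m < ordC l k)
        = Finset.range ((Finset.range N).filter (fun i => m < l i)).card := by
      ext k
      have := cardle m
      simp only [Finset.mem_filter, Finset.mem_range, key]
      omega
    rw [this, Finset.card_range]
  · intro j k hjk
    by_contra hc
    push Not at hc
    have := (key k _).1 hc
    have := (key j _).2 (lt_of_le_of_lt hjk this)
    omega

theorem sup_ordC_le (n : ℕ) (a : ℝ) (ha : 0 < a) (l : ℕ → ℕ) (h : IsWeakCompOf n l)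
    (φ : ℝ → ℝ) (hφ_nonneg : ∀ x : ℝ, 0 ≤ x → 0 ≤ φ x)
    (hφ_anti : AntitoneOn φ (Set.Ici 0)) :
    (⨆ x : NNReal, |rescaledBoundary n a (ordC l) x - φ x|)
      ≤ ⨆ x : NNReal, |rescaledBoundary n a l x - φ x| := by
  obtain ⟨⟨M, hM⟩, -⟩ := weak_bounds n l h
  have hc : 0 ≤ a / (n : ℝ) := by positivity
  have hb : BddAbove (Set.range fun x : NNReal => |rescaledBoundary n a l x - φ x|) := by
    refine ⟨a / n * M + φ 0, ?_⟩
    rintro _ ⟨x, rfl⟩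
    have h1 : rescaledBoundary n a l x ≤ a / n * M :=
      mul_le_mul_of_nonneg_left (by exact_mod_cast hM _) hc
    have h0 : 0 ≤ rescaledBoundary n a l x := mul_nonneg hc (by positivity)
    have h2 := hφ_nonneg x x.2
    have h3 : φ x ≤ φ 0 := hφ_anti (by simp) (by simp) x.2
    simp only [abs_le]
    constructor <;> linarith
  set E := ⨆ x : NNReal, |rescaledBoundary n a l x - φ x| with hE
  have hle : ∀ y : ℝ, 0 ≤ y → |rescaledBoundary n a l y - φ y| ≤ E :=
    fun y hy => le_ciSup hb ⟨y, hy⟩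
  refine ciSup_le (fun x => ?_)
  have hx : (0 : ℝ) ≤ x := x.2
  generalize (x : ℝ) = x at hx
  have hax : 0 ≤ a * x := by positivity
  rw [abs_le]
  constructor
  · -- lower bound
    obtain ⟨i, hi, hmin⟩ := Finset.exists_min_image (Finset.range (⌊a * x⌋₊ + 1)) l ⟨0, by simp⟩
    have hi' : i ≤ ⌊a * x⌋₊ := by simpa [Nat.lt_succ_iff] using hi
    have h1 : l i ≤ ordC l ⌊a * x⌋₊ := le_ordC l M hM _ _ _ (by simp) hmin
    have hy0 : 0 ≤ (i : ℝ) / a := by positivity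
    have hyx : (i : ℝ) / a ≤ x := by
      rw [div_le_iff₀ ha, mul_comm]
      exact (Nat.cast_le.2 hi').trans (Nat.floor_le hax)
    have hfl : ⌊a * ((i : ℝ) / a)⌋₊ = i := by
      rw [mul_div_cancel₀ _ ha.ne']; simp
    have h2 := (abs_le.1 (hle _ hy0)).1
    have h3 : φ x ≤ φ (i / a) := hφ_anti hy0 hx hyx
    have h4 : rescaledBoundary n a l (i / a) ≤ rescaledBoundary n a (ordC l) x := by
      unfold rescaledBoundary
      rw [hfl]
      exact mul_le_mul_of_nonneg_left (by exact_mod_cast h1) hc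
    linarith
  · obtain ⟨s, hs, hs'⟩ := ordC_mem l M hM ⌊a * x⌋₊
    obtain ⟨i, his, hi⟩ : ∃ i ∈ s, ⌊a * x⌋₊ ≤ i := by
      by_contra hcon
      push Not at hcon
      have : s ⊆ Finset.range ⌊a * x⌋₊ := fun i hi => by simpa using hcon i hi
      have := Finset.card_le_card this
      rw [Finset.card_range] at this
      omega
    obtain ⟨y, hxy, hfl⟩ : ∃ y, x ≤ y ∧ ⌊a * y⌋₊ = i := by
      rcases hi.eq_or_lt with h | h
      · exact ⟨x, le_rfl, h⟩
      · refine ⟨i / a, ?_, by rw [mul_div_cancel₀ _ ha.ne']; simp⟩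
        rw [le_div_iff₀ ha, mul_comm]
        exact ((Nat.floor_lt hax).1 h).le
    have hy0 := hx.trans hxy
    have h2 := (abs_le.1 (hle _ hy0)).2
    have h3 : φ y ≤ φ x := hφ_anti hx hy0 hxy
    have h4 : rescaledBoundary n a (ordC l) x ≤ rescaledBoundary n a l y := by
      unfold rescaledBoundary
      rw [hfl]
      exact mul_le_mul_of_nonneg_left (by exact_mod_cast hs' i his) hc
    linarith

theorem limit_shape_transfers_to_partitions
    (ρ : ℕ → (ℕ → ℕ) → ℝ) (ν : ℕ → (ℕ → ℕ) → ℝ)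
    (a : ℕ → ℝ) (ha : ∀ n, 0 < n → 0 < a n)
    (hρ_nonneg : ∀ n, 0 < n → ∀ α, 0 ≤ ρ n α)
    (hρ_supp : ∀ n, 0 < n → ∀ α, ¬ IsWeakCompOf n α → ρ n α = 0)
    (hρ_total : ∀ n, 0 < n → HasSum (ρ n) 1)
    (hν : ∀ n, 0 < n → ∀ l, ν n l =
      ∑' α : {α : ℕ → ℕ // IsWeakCompOf n α ∧ ordC α = l}, ρ n α.1)
    (φ : ℝ → ℝ)
    (hφ_nonneg : ∀ x : ℝ, 0 ≤ x → 0 ≤ φ x)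
    (hφ_anti : AntitoneOn φ (Set.Ici 0))
    (hφ_rc : ∀ x : ℝ, 0 ≤ x → ContinuousWithinAt φ (Set.Ici x) x)
    (hφ_lim : Tendsto φ atTop (nhds 0))
    (hconv : ∀ ε : ℝ, 0 < ε →
      Tendsto (fun n =>
        ∑' α : {α : ℕ → ℕ // IsWeakCompOf n α ∧
            (⨆ x : NNReal, |rescaledBoundary n (a n) α x - φ x|) < ε}, ρ n α.1)
        atTop (nhds 1)) :
    ∀ ε : ℝ, 0 < ε →
      Tendsto (fun n =>
        ∑' l : {l : ℕ → ℕ // IsPartitionOf n l ∧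
            (⨆ x : NNReal, |rescaledBoundary n (a n) l x - φ x|) < ε}, ν n l.1)
        atTop (nhds 1) := by
  intro ε hε
  have main : ∀ n, 0 < n →
      (∑' α : {α : ℕ → ℕ // IsWeakCompOf n α ∧
            (⨆ x : NNReal, |rescaledBoundary n (a n) α x - φ x|) < ε}, ρ n α.1)
        ≤ (∑' l : {l : ℕ → ℕ // IsPartitionOf n l ∧
            (⨆ x : NNReal, |rescaledBoundary n (a n) l x - φ x|) < ε}, ν n l.1) ∧
      (∑' l : {l : ℕ → ℕ // IsPartitionOf n l ∧
            (⨆ x : NNReal, |rescaledBoundary n (a n) l x - φ x|) < ε}, ν n l.1) ≤ 1 := by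
    intro n hn
    let B := {l : ℕ → ℕ // IsPartitionOf n l ∧
            (⨆ x : NNReal, |rescaledBoundary n (a n) l x - φ x|) < ε}
    let S := Σ l : B, {α : ℕ → ℕ // IsWeakCompOf n α ∧ ordC α = l.1}
    let p : S → (ℕ → ℕ) := fun q => q.2.1
    have hp : Function.Injective p := by
      rintro ⟨⟨l, hl⟩, ⟨α, h1, h2⟩⟩ ⟨⟨l', hl'⟩, ⟨α', h1', h2'⟩⟩ h
      simp only at h2 h2'
      have h : α = α' := h
      subst h h2 h2'
      rfl
    have hsum := (hρ_total n hn).summable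
    have hS : Summable (fun q : S => ρ n (p q)) := hsum.comp_injective hp
    have heq : (∑' l : B, ν n l.1) = ∑' q : S, ρ n (p q) := by
      rw [hS.tsum_sigma]
      exact tsum_congr (fun l => hν n hn l.1)
    change _ ≤ (∑' l : B, ν n l.1) ∧ (∑' l : B, ν n l.1) ≤ 1
    rw [heq]
    constructor
    · let A := {α : ℕ → ℕ // IsWeakCompOf n α ∧
            (⨆ x : NNReal, |rescaledBoundary n (a n) α x - φ x|) < ε}
      let e : A → S := fun α => ⟨⟨ordC α.1, ordC_isPartition n α.1 α.2.1,
        (sup_ordC_le n (a n) (ha n hn) α.1 α.2.1 φ hφ_nonneg hφ_anti).trans_lt α.2.2⟩,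
        ⟨α.1, α.2.1, rfl⟩⟩
      have he : Function.Injective e := by
        intro α β h
        exact Subtype.ext (congrArg p h)
      exact Summable.tsum_le_tsum_of_inj e he (fun q _ => hρ_nonneg n hn _) (fun α => le_rfl)
        (hsum.comp_injective Subtype.val_injective) hS
    · rw [← (hρ_total n hn).tsum_eq]
      exact Summable.tsum_le_tsum_of_inj p hp (fun q _ => hρ_nonneg n hn _) (fun α => le_rfl)
        hS hsum
  refine tendsto_of_tendsto_of_tendsto_of_le_of_le' (hconv ε hε) tendsto_const_nhds ?_ ?_
  · filter_upwards [eventually_gt_atTop 0] with n hn using (main n hn).1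
  · filter_upwards [eventually_gt_atTop 0] with n hn using (main n hn).2
end

section
/- For each positive integer n let p = p(n) ∈ (0,1) satisfy p → 0 and p/((log n)/n) → ∞ as n → ∞, and let m = m(n) be a positive integer with m > (ε²/(2+ε))·n. Fix ε > 0 and δ ∈ (0,1). Model m rounds of the card-based stochastic Bulgarian solitaire as follows: the initial configuration is any weak composition λ⁰ of n (an assignment of the n cards to initial piles), and (X_{i,t}), for 1 ≤ i ≤ n and 1 ≤ t ≤ m, are i.i.d. Bernoulli(p) random variables, where X_{i,t} = 1 means card i is picked into the new pile in round t. After m rounds form the weak composition α of n whose k-th part is: for 1 ≤ k ≤ m, α_k = #{i : X_{i,m−k+1} = 1 and X_{i,s} = 0 for all m−k+1 < s ≤ m}; and for k > m, α_k = #{cards i assigned to initial pile k−m of λ⁰ with X_{i,s} = 0 for all 1 ≤ s ≤ m}. Let λ^(m) = ord α be the integer partition obtained by sorting α. Then there exists N such that for all n ≥ N and every initial configuration λ⁰, P( sup_{x≥0} |∂^{1/p} λ^(m)(x) − e^{−x}| ≤ ε ) ≥ 1 − exp(−(ε²/(2+ε))·n·p·(1−δ)). -/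
open Filter MeasureTheory ProbabilityTheory

lemma bs_mgf {Ω : Type} [MeasurableSpace Ω] (P : Measure Ω) [IsProbabilityMeasure P]
    (A : Set Ω) (hA : MeasurableSet A) (t : ℝ) :
    mgf (A.indicator fun _ => (1:ℝ)) P t ≤ Real.exp (P.real A * (Real.exp t - 1)) := by
  have h1 : (fun ω => Real.exp (t * A.indicator (fun _ => (1:ℝ)) ω)) =
      fun ω => 1 + A.indicator (fun _ => Real.exp t - 1) ω := by
    funext ω
    by_cases h : ω ∈ A <;> simp [h]
  rw [mgf, h1, integral_add (integrable_const _)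
    ((integrable_const _).indicator hA), integral_indicator_const _ hA]
  simp only [integral_const, probReal_univ, smul_eq_mul, one_mul]
  linarith [Real.add_one_le_exp (P.real A * (Real.exp t - 1))]

lemma bs_exponent (ν μ e : ℝ) (hμ : μ ≤ ν) (hν : 0 ≤ ν) (he : 0 < e) :
    -Real.log (1 + e) * (μ + e * ν) + μ * (Real.exp (Real.log (1 + e)) - 1)
      ≤ -(e ^ 2 / (2 + e)) * ν := by
  have h1 := Real.le_log_one_add_of_nonneg he.le
  have h3 := Real.log_le_sub_one_of_pos (show 0 < 1 + e by linarith)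
  rw [Real.exp_log (by linarith)]
  set L := Real.log (1 + e)
  have h2 : e ^ 2 / (2 + e) = (1 + e) * (2 * e / (e + 2)) - e := by
    field_simp; ring
  have h4 : e ^ 2 / (2 + e) ≤ (1 + e) * L - e := by
    rw [h2]; nlinarith
  nlinarith

lemma bs_exponent2 (ν μ e : ℝ) (h0 : 0 ≤ μ) (hμ : μ ≤ ν) (hν : 0 ≤ ν) (he : 0 < e) :
    -(-Real.log (1 + e)) * (μ - e * ν) + μ * (Real.exp (-Real.log (1 + e)) - 1)
      ≤ -(e ^ 2 / (2 + e)) * ν := by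
  refine le_trans ?_ (bs_exponent ν μ e hμ hν he)
  have hL : 0 ≤ Real.log (1 + e) := Real.log_nonneg (by linarith)
  have h := Real.self_le_sinh_iff.2 hL
  rw [Real.sinh_eq] at h
  nlinarith

lemma bs_chernoff {Ω : Type} [MeasurableSpace Ω] (P : Measure Ω) [IsProbabilityMeasure P]
    (n : ℕ) (A : Fin n → Set Ω) (hA : ∀ i, MeasurableSet (A i)) (hI : iIndepSet A P)
    (p r e : ℝ) (h0 : 0 ≤ r) (hr : r ≤ p) (he : 0 < e) (hAr : ∀ i, P.real (A i) = r) :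
    P.real {ω | e * (n * p) ≤ |(Set.ncard {i : Fin n | ω ∈ A i} : ℝ) - n * r|} ≤
      2 * Real.exp (-(e ^ 2 / (2 + e)) * (n * p)) := by
  classical
  set S : Ω → ℝ := ∑ i, (A i).indicator fun _ => (1:ℝ) with hS
  have hSc : ∀ ω, (Set.ncard {i : Fin n | ω ∈ A i} : ℝ) = S ω := by
    intro ω
    rw [hS, Finset.sum_apply, Set.ncard_eq_toFinset_card']
    simp [Set.indicator_apply]
  have hmeas : ∀ i, Measurable ((A i).indicator fun _ => (1:ℝ)) :=
    fun i => measurable_const.indicator (hA i)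
  have hmgf : ∀ t, mgf S P t ≤ Real.exp ((n * r) * (Real.exp t - 1)) := by
    intro t
    rw [hS, (hI.iIndepFun_indicator (β := ℝ)).mgf_sum hmeas Finset.univ]
    calc _ ≤ ∏ i : Fin n, Real.exp (r * (Real.exp t - 1)) := by
            refine Finset.prod_le_prod (fun i _ => mgf_nonneg) fun i _ => ?_
            rw [← hAr i]; exact bs_mgf P (A i) (hA i) t
      _ = _ := by
            rw [Finset.prod_const, ← Real.exp_nat_mul]; simp; ring
  have hSm : Measurable S := by
    have : S = fun ω => ∑ i, (A i).indicator (fun _ => (1:ℝ)) ω := by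
      funext ω; rw [hS, Finset.sum_apply]
    rw [this]; exact Finset.measurable_sum _ fun i _ => hmeas i
  have hSb : ∀ ω, |S ω| ≤ n := by
    intro ω
    rw [← hSc, abs_of_nonneg (by positivity)]
    have := Set.ncard_le_card {i : Fin n | ω ∈ A i}
    simp at this
    exact_mod_cast this
  have hint : ∀ t, Integrable (fun ω => Real.exp (t * S ω)) P := by
    intro t
    refine Integrable.of_bound (C := Real.exp (|t| * n)) (by fun_prop) ?_
    refine Filter.Eventually.of_forall fun ω => ?_
    rw [Real.norm_eq_abs, Real.abs_exp, Real.exp_le_exp]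
    calc _ ≤ |t * S ω| := le_abs_self _
      _ = |t| * |S ω| := abs_mul _ _
      _ ≤ _ := by gcongr; exact hSb ω
  have hL : 0 ≤ Real.log (1 + e) := Real.log_nonneg (by linarith)
  have hν : (0:ℝ) ≤ n * p := mul_nonneg (by positivity) (h0.trans hr)
  have hμν : (n * r : ℝ) ≤ n * p := by gcongr
  have hμ0 : (0:ℝ) ≤ n * r := by positivity
  have u1 : P.real {ω | n * r + e * (n * p) ≤ S ω} ≤ Real.exp (-(e ^ 2 / (2 + e)) * (n * p)) := by
    refine (measure_ge_le_exp_mul_mgf _ hL (hint _)).trans ?_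
    refine (mul_le_mul_of_nonneg_left (hmgf _) (Real.exp_pos _).le).trans ?_
    rw [← Real.exp_add, Real.exp_le_exp]
    exact bs_exponent _ _ _ hμν hν he
  have u2 : P.real {ω | S ω ≤ n * r - e * (n * p)} ≤ Real.exp (-(e ^ 2 / (2 + e)) * (n * p)) := by
    refine (measure_le_le_exp_mul_mgf _ (neg_nonpos.2 hL) (hint _)).trans ?_
    refine (mul_le_mul_of_nonneg_left (hmgf _) (Real.exp_pos _).le).trans ?_
    rw [← Real.exp_add, Real.exp_le_exp]
    exact bs_exponent2 _ _ _ hμ0 hμν hν he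
  calc _ ≤ P.real ({ω | n * r + e * (n * p) ≤ S ω} ∪ {ω | S ω ≤ n * r - e * (n * p)}) := by
        refine measureReal_mono (fun ω hω => ?_)
        simp only [Set.mem_ofPred_eq, hSc] at hω
        rcases le_abs.1 hω with h | h
        · left; simp only [Set.mem_ofPred_eq]; linarith
        · right; simp only [Set.mem_ofPred_eq]; linarith
    _ ≤ _ := (measureReal_union_le _ _).trans (by linarith)

lemma bs_pattern {Ω : Type} [MeasurableSpace Ω] (P : Measure Ω) [IsProbabilityMeasure P]
    (n M : ℕ) (X : Fin n × Fin M → Ω → ℕ) (hX : ∀ idx, Measurable (X idx))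
    (hI : iIndepFun X P) (T : Finset (Fin M)) (v : Fin M → ℕ) :
    (∀ i, MeasurableSet {ω | ∀ s ∈ T, X (i, s) ω = v s}) ∧
    (∀ i, P {ω | ∀ s ∈ T, X (i, s) ω = v s} = ∏ s ∈ T, P {ω | X (i, s) ω = v s}) ∧
    iIndepSet (fun i => {ω | ∀ s ∈ T, X (i, s) ω = v s}) P := by
  have hm : ∀ i, MeasurableSet {ω | ∀ s ∈ T, X (i, s) ω = v s} := by
    intro i
    have : {ω | ∀ s ∈ T, X (i, s) ω = v s} = ⋂ s ∈ T, X (i, s) ⁻¹' {v s} := by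
      ext ω; simp
    rw [this]
    exact Finset.measurableSet_biInter _ fun s _ => hX _ (measurableSet_singleton _)
  have key : ∀ S : Finset (Fin n), P (⋂ i ∈ S, {ω | ∀ s ∈ T, X (i, s) ω = v s}) =
      ∏ i ∈ S, ∏ s ∈ T, P {ω | X (i, s) ω = v s} := by
    intro S
    have h := hI.measure_inter_preimage_eq_mul (S ×ˢ T) (sets := fun x => {v x.2})
      (fun _ _ => measurableSet_singleton _)
    rw [Finset.prod_product] at h
    refine Eq.trans ?_ h
    congr 1
    ext ω
    simp only [Set.mem_iInter, Set.mem_ofPred_eq, Finset.mem_product, Set.mem_preimage,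
      Set.mem_singleton_iff, Prod.forall]
    exact ⟨fun h a b hab => h a hab.1 b hab.2, fun h a ha b hb => h a b ⟨ha, hb⟩⟩
  have h1 : ∀ i, P {ω | ∀ s ∈ T, X (i, s) ω = v s} = ∏ s ∈ T, P {ω | X (i, s) ω = v s} := by
    intro i
    simpa using key {i}
  refine ⟨hm, h1, (iIndepSet_iff_meas_biInter hm).2 fun S => ?_⟩
  rw [key]
  exact Finset.prod_congr rfl fun i _ => (h1 i).symm

lemma bs_ord (α : ℕ → ℕ) (f : ℕ → ℝ) (hf : Antitone f) (a e : ℝ) (ha : 0 ≤ a) (B : ℕ)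
    (hB : ∀ j, α j ≤ B)
    (h : ∀ j, |a * α j - f j| ≤ e) (k : ℕ) : |a * ordC α k - f k| ≤ e := by
  have hne : {m : ℕ | ∃ s : Finset ℕ, s.card = k + 1 ∧ ∀ i ∈ s, m ≤ α i}.Nonempty :=
    ⟨0, Finset.range (k+1), by simp, by simp⟩
  have hbdd : BddAbove {m : ℕ | ∃ s : Finset ℕ, s.card = k + 1 ∧ ∀ i ∈ s, m ≤ α i} := by
    refine ⟨B, ?_⟩
    rintro m ⟨s, hs, hm⟩
    obtain ⟨i, hi⟩ := Finset.card_pos.1 (by omega : 0 < s.card)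
    exact (hm i hi).trans (hB i)
  rw [abs_le]
  constructor
  · obtain ⟨i, hi, hmin⟩ := Finset.exists_min_image (Finset.range (k+1)) α ⟨0, by simp⟩
    have h1 : α i ≤ ordC α k := le_csSup hbdd ⟨Finset.range (k+1), by simp, hmin⟩
    have h2 := (abs_le.1 (h i)).1
    have h3 : f k ≤ f i := hf (by simp at hi; omega)
    have h4 : a * (α i : ℝ) ≤ a * ordC α k := by gcongr
    linarith
  · obtain ⟨s, hs, hm⟩ := Nat.sSup_mem hne hbdd
    obtain ⟨i, hi, hik⟩ : ∃ i ∈ s, k ≤ i := by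
      by_contra! hc
      have : s ⊆ Finset.range k := fun i hi => Finset.mem_range.2 (hc i hi)
      have := Finset.card_le_card this
      simp at this; omega
    have h1 : ordC α k ≤ α i := hm i hi
    have h2 := (abs_le.1 (h i)).2
    have h3 : f i ≤ f k := hf hik
    have h4 : a * (ordC α k : ℝ) ≤ a * α i := by gcongr
    linarith

lemma bs_exp (p : ℝ) (hp : 0 < p) (hp2 : p ≤ 1 / 2) (x : ℝ) (hx : 0 ≤ x) :
    |(1 - p) ^ ⌊1 / p * x⌋₊ - Real.exp (-x)| ≤ 3 * p := by
  set k := ⌊1 / p * x⌋₊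
  have hk1 : (k : ℝ) * p ≤ x := by
    have := Nat.floor_le (show 0 ≤ 1 / p * x by positivity)
    calc (k:ℝ) * p ≤ (1 / p * x) * p := by gcongr
      _ = x := by field_simp
  have hk2 : x ≤ k * p + p := by
    have := Nat.lt_floor_add_one (1 / p * x)
    calc x = (1 / p * x) * p := by field_simp
      _ ≤ (k + 1) * p := by gcongr
      _ = _ := by ring
  have hup : (1 - p) ^ k ≤ Real.exp (-(k * p)) := by
    calc (1 - p) ^ k ≤ (Real.exp (-p)) ^ k :=
          pow_le_pow_left₀ (by linarith) (Real.one_sub_le_exp_neg p) k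
      _ = _ := by rw [← Real.exp_nat_mul]; ring_nf
  have hq : Real.exp (-(p + 2 * p ^ 2)) ≤ 1 - p := by
    have := Real.add_one_le_exp (p + 2 * p ^ 2)
    rw [Real.exp_neg, inv_le_comm₀ (Real.exp_pos _) (by linarith)]
    refine le_trans ?_ this
    rw [inv_le_iff_one_le_mul₀ (by linarith)]
    nlinarith [sq_nonneg p]
  have hlow : Real.exp (-(k * p)) - 2 * p ≤ (1 - p) ^ k := by
    have h1 : Real.exp (-(k * p)) * Real.exp (-(2 * p * (k * p))) ≤ (1 - p) ^ k := by
      calc _ = (Real.exp (-(p + 2 * p ^ 2))) ^ k := by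
            rw [← Real.exp_nat_mul, ← Real.exp_add]; ring_nf
        _ ≤ _ := pow_le_pow_left₀ (Real.exp_pos _).le hq k
    have h2 := Real.one_sub_le_exp_neg (2 * p * (k * p))
    have h3 : (k * p) * Real.exp (-(k * p)) ≤ 1 := by
      rw [Real.exp_neg, ← div_eq_mul_inv, div_le_one (Real.exp_pos _)]
      linarith [Real.add_one_le_exp ((k:ℝ) * p)]
    have h4 := mul_le_mul_of_nonneg_left h2 (Real.exp_pos (-(k * p))).le
    nlinarith
  have e1 : Real.exp (-x) ≤ Real.exp (-(k * p)) := Real.exp_le_exp.2 (by linarith)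
  have e2 : Real.exp (-(k * p)) - p ≤ Real.exp (-x) := by
    have h1 : Real.exp (-(k * p)) * Real.exp (-p) ≤ Real.exp (-x) := by
      rw [← Real.exp_add]; exact Real.exp_le_exp.2 (by linarith)
    have h2 := Real.one_sub_le_exp_neg p
    have h3 : Real.exp (-(k * p)) ≤ 1 := Real.exp_le_one_iff.2 (by simp; positivity)
    have h4 := mul_le_mul_of_nonneg_left h2 (Real.exp_pos (-(k * p))).le
    nlinarith
  rw [abs_le]; constructor <;> linarith

noncomputable def bsAlpha {Ω : Type} (n M : ℕ) (hM : 0 < M) (X : Fin n × Fin M → Ω → ℕ)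
    (c : Fin n → ℕ) (ω : Ω) : ℕ → ℕ := fun j =>
  if hj : j < M then
    Set.ncard {i : Fin n | X (i, ⟨M - 1 - j, by omega⟩) ω = 1 ∧
      ∀ s : Fin M, M - 1 - j < (s : ℕ) → X (i, s) ω = 0}
  else
    Set.ncard {i : Fin n | c i = j - M ∧ ∀ s : Fin M, X (i, s) ω = 0}

lemma bs_alpha_le {Ω : Type} (n M : ℕ) (hM : 0 < M) (X : Fin n × Fin M → Ω → ℕ)
    (c : Fin n → ℕ) (ω : Ω) (j : ℕ) : bsAlpha n M hM X c ω j ≤ n := by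
  unfold bsAlpha
  split_ifs
  · simpa using Set.ncard_le_card (α := Fin n) _
  · simpa using Set.ncard_le_card (α := Fin n) _

lemma bs_zero {Ω : Type} [MeasurableSpace Ω] (P : Measure Ω) [IsProbabilityMeasure P]
    (Y : Ω → ℕ) (hY : Measurable Y) (h01 : ∀ ω, Y ω = 0 ∨ Y ω = 1) (p : ℝ) (hp : 0 < p)
    (h : P {ω | Y ω = 1} = ENNReal.ofReal p) :
    P.real {ω | Y ω = 1} = p ∧ P.real {ω | Y ω = 0} = 1 - p := by
  have h1 : P.real {ω | Y ω = 1} = p := by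
    rw [measureReal_def, h, ENNReal.toReal_ofReal hp.le]
  refine ⟨h1, ?_⟩
  have : {ω | Y ω = 0} = {ω | Y ω = 1}ᶜ := by
    ext ω
    have := h01 ω
    simp only [Set.mem_ofPred_eq, Set.mem_compl_iff]
    omega
  have hms : MeasurableSet {ω | Y ω = 1} := hY (measurableSet_singleton 1)
  rw [this, probReal_compl_eq_one_sub hms, h1]

lemma bs_pile {Ω : Type} [MeasurableSpace Ω] (P : Measure Ω) [IsProbabilityMeasure P]
    (n M : ℕ) (hM : 0 < M) (X : Fin n × Fin M → Ω → ℕ) (hX : ∀ idx, Measurable (X idx))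
    (h01 : ∀ idx ω, X idx ω = 0 ∨ X idx ω = 1) (p : ℝ) (hp : 0 < p) (hp1 : p < 1)
    (hXp : ∀ idx, P {ω | X idx ω = 1} = ENNReal.ofReal p)
    (hI : iIndepFun X P) (c : Fin n → ℕ) (e : ℝ) (he : 0 < e) (j : ℕ) (hj : j < M) :
    P.real {ω | e * (n * p) ≤ |(bsAlpha n M hM X c ω j : ℝ) - n * (p * (1 - p) ^ j)|} ≤
      2 * Real.exp (-(e ^ 2 / (2 + e)) * (n * p)) := by
  classical
  set t0 : Fin M := ⟨M - 1 - j, by omega⟩ with ht0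
  obtain ⟨hm, hprod, hind⟩ := bs_pattern P n M X hX hI (Finset.Ici t0)
    (fun s => if s = t0 then 1 else 0)
  have hq0 : 0 ≤ 1 - p := by linarith
  have hr : p * (1 - p) ^ j ≤ p :=
    mul_le_of_le_one_right hp.le (pow_le_one₀ hq0 (by linarith))
  have hA : ∀ i, P.real {ω | ∀ s ∈ Finset.Ici t0, X (i, s) ω = if s = t0 then 1 else 0} =
      p * (1 - p) ^ j := by
    intro i
    rw [measureReal_def, hprod i, ENNReal.toReal_prod, ← Finset.Ioi_insert t0,
      Finset.prod_insert (by simp)]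
    congr 1
    · simpa [measureReal_def] using (bs_zero P (X (i, t0)) (hX _) (h01 _) p hp (hXp _)).1
    · rw [Finset.prod_congr rfl (g := fun _ => 1 - p)]
      · rw [Finset.prod_const, Fin.card_Ioi]
        congr 1
        simp only [ht0]; omega
      · intro s hs
        have hne : s ≠ t0 := (Finset.mem_Ioi.1 hs).ne'
        simpa [hne, measureReal_def] using (bs_zero P (X (i, s)) (hX _) (h01 _) p hp (hXp _)).2
  have := bs_chernoff P n _ hm hind p (p * (1 - p) ^ j) e (by positivity) hr he hA
  convert this using 7 with ω
  simp only [bsAlpha, hj, dif_pos]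
  congr 2
  ext i
  simp only [Set.mem_ofPred_eq, Finset.mem_Ici]
  constructor
  · rintro ⟨h1, h2⟩ s hs
    split_ifs with h
    · subst h; exact h1
    · have hlt : t0 < s := lt_of_le_of_ne hs (Ne.symm h)
      exact h2 s hlt
  · intro h
    refine ⟨by simpa using h t0 le_rfl, fun s hs => ?_⟩
    have hlt : t0 < s := hs
    simpa [hlt.ne'] using h s hlt.le

lemma bs_untouched {Ω : Type} [MeasurableSpace Ω] (P : Measure Ω) [IsProbabilityMeasure P]
    (n M : ℕ) (X : Fin n × Fin M → Ω → ℕ) (hX : ∀ idx, Measurable (X idx))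
    (h01 : ∀ idx ω, X idx ω = 0 ∨ X idx ω = 1) (p : ℝ) (hp : 0 < p)
    (hXp : ∀ idx, P {ω | X idx ω = 1} = ENNReal.ofReal p)
    (hI : iIndepFun X P) (J : ℕ) (hJ : J ≤ M) (i : Fin n) :
    P.real {ω | ∀ s : Fin M, M - J ≤ (s : ℕ) → X (i, s) ω = 0} = (1 - p) ^ J := by
  classical
  obtain ⟨hm, hprod, hind⟩ := bs_pattern P n M X hX hI
    (Finset.univ.filter fun s : Fin M => M - J ≤ (s : ℕ)) (fun s => 0)
  have h := hprod i
  simp only [Finset.mem_filter, Finset.mem_univ, true_and] at h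
  rw [measureReal_def, h, ENNReal.toReal_prod, Finset.prod_congr rfl (g := fun _ => 1 - p)]
  · rw [Finset.prod_const]
    congr 1
    rcases Nat.eq_zero_or_pos J with h0 | h0
    · subst h0
      rw [Finset.card_eq_zero, Finset.filter_eq_empty_iff]
      intro s _
      have := s.2
      omega
    · have : (Finset.univ.filter fun s : Fin M => M - J ≤ (s : ℕ)) =
          Finset.Ici (⟨M - J, by omega⟩ : Fin M) := by
        ext s
        simp [Fin.le_def]
      rw [this, Fin.card_Ici]
      simp only
      omega
  · intro s hs
    exact (bs_zero P (X (i, s)) (hX _) (h01 _) p hp (hXp _)).2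

lemma bs_alpha_zero {Ω : Type} (n M : ℕ) (hM : 0 < M) (X : Fin n × Fin M → Ω → ℕ)
    (c : Fin n → ℕ) (ω : Ω) (J : ℕ) (hJ : J ≤ M)
    (h : ∀ i : Fin n, ¬ ∀ s : Fin M, M - J ≤ (s : ℕ) → X (i, s) ω = 0) (j : ℕ) (hj : J ≤ j) :
    bsAlpha n M hM X c ω j = 0 := by
  unfold bsAlpha
  split_ifs with hjM
  · rw [Set.ncard_eq_zero, Set.eq_empty_iff_forall_notMem]
    rintro i ⟨h1, h2⟩
    exact h i fun s hs => h2 s (by omega)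
  · rw [Set.ncard_eq_zero, Set.eq_empty_iff_forall_notMem]
    rintro i ⟨h1, h2⟩
    exact h i fun s hs => h2 s

lemma bs_bad {Ω : Type} [MeasurableSpace Ω] (P : Measure Ω) [IsProbabilityMeasure P]
    (n M : ℕ) (hM : 0 < M) (X : Fin n × Fin M → Ω → ℕ) (hX : ∀ idx, Measurable (X idx))
    (h01 : ∀ idx ω, X idx ω = 0 ∨ X idx ω = 1) (p : ℝ) (hp : 0 < p) (hp1 : p < 1)
    (hXp : ∀ idx, P {ω | X idx ω = 1} = ENNReal.ofReal p)
    (hI : iIndepFun X P) (c : Fin n → ℕ) (e : ℝ) (he : 0 < e) (J : ℕ) (hJ : J ≤ M) :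
    P.real ((⋃ j ∈ Finset.range J,
      {ω | e * (n * p) ≤ |(bsAlpha n M hM X c ω j : ℝ) - n * (p * (1 - p) ^ j)|}) ∪
      ⋃ i ∈ (Finset.univ : Finset (Fin n)), {ω | ∀ s : Fin M, M - J ≤ (s : ℕ) → X (i, s) ω = 0}) ≤
      J * (2 * Real.exp (-(e ^ 2 / (2 + e)) * (n * p))) + n * (1 - p) ^ J := by
  refine (measureReal_union_le _ _).trans (add_le_add ?_ ?_)
  · refine (measureReal_biUnion_finset_le _ _).trans ?_
    refine (Finset.sum_le_sum fun j hj => bs_pile P n M hM X hX h01 p hp hp1 hXp hI c e he j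
      (by simp at hj; omega)).trans ?_
    simp
  · refine (measureReal_biUnion_finset_le _ _).trans ?_
    refine (Finset.sum_le_sum fun i hi => (bs_untouched P n M X hX h01 p hp hXp hI J hJ i).le).trans ?_
    simp

lemma bs_good {Ω : Type} (n M : ℕ) (hn : 0 < n) (hM : 0 < M) (X : Fin n × Fin M → Ω → ℕ)
    (p : ℝ) (hp : 0 < p) (hp1 : p ≤ 1 / 2)
    (c : Fin n → ℕ) (e : ℝ) (J : ℕ) (hJ : J ≤ M) (hq : (1 - p) ^ J ≤ e) (ω : Ω)
    (h : ω ∉ (⋃ j ∈ Finset.range J,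
      {ω | e * (n * p) ≤ |(bsAlpha n M hM X c ω j : ℝ) - n * (p * (1 - p) ^ j)|}) ∪
      ⋃ i ∈ (Finset.univ : Finset (Fin n)), {ω | ∀ s : Fin M, M - J ≤ (s : ℕ) → X (i, s) ω = 0}) :
    ⨆ x : NNReal, |rescaledBoundary n (1 / p) (ordC (bsAlpha n M hM X c ω)) x -
      Real.exp (-(x : ℝ))| ≤ e + 3 * p := by
  simp only [Set.mem_union, Set.mem_iUnion, not_or, not_exists, Finset.mem_range, Finset.mem_univ,
    Set.mem_ofPred_eq, not_le] at h
  obtain ⟨h1, h2⟩ := h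
  have hn' : (0:ℝ) < n := by exact_mod_cast hn
  have hq0 : 0 ≤ 1 - p := by linarith
  have hanti : Antitone fun j : ℕ => (1 - p) ^ j := fun a b hab =>
    pow_le_pow_of_le_one hq0 (by linarith) hab
  have key : ∀ j, |(1 / p / n) * (bsAlpha n M hM X c ω j : ℝ) - (1 - p) ^ j| ≤ e := by
    intro j
    rcases lt_or_ge j J with hj | hj
    · have h3 := h1 j hj
      have : (1 / p / n) * (bsAlpha n M hM X c ω j : ℝ) - (1 - p) ^ j =
          (1 / (n * p)) * ((bsAlpha n M hM X c ω j : ℝ) - n * (p * (1 - p) ^ j)) := by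
        field_simp
      rw [this, abs_mul, abs_of_pos (by positivity), one_div, inv_mul_le_iff₀ (by positivity)]
      linarith
    · rw [bs_alpha_zero n M hM X c ω J hJ (fun i => h2 i trivial) j hj]
      simp only [Nat.cast_zero, mul_zero, zero_sub, abs_neg]
      rw [abs_of_nonneg (by positivity)]
      exact (hanti hj).trans hq
  refine ciSup_le fun x => ?_
  have a1 := bs_ord _ _ hanti (1 / p / n) e (by positivity) n
    (bs_alpha_le n M hM X c ω) key ⌊1 / p * (x:ℝ)⌋₊
  have a2 := bs_exp p hp hp1 x x.2
  unfold rescaledBoundary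
  exact (abs_sub_le _ _ _).trans (add_le_add a1 a2)


set_option maxHeartbeats 2000000 in
/-- The limit shape theorem for the card-based stochastic Bulgarian solitaire.
For each `n`, play `m n` rounds with pick-probability `p n`, where `p n → 0`,
`p n / (log n / n) → ∞` and `m n > (ε²/(2+ε))·n`.  The rounds are 0-indexed by
`Fin (m n)`; `X (i, t) ω = 1` means card `i` is picked in round `t+1`, and
`c i` is the (0-indexed) initial pile of card `i`.  After `m n` rounds, the pile
composition `α` is (0-indexed; part `j` corresponds to the pile `k = j+1`):
for `j < m n`, the number of cards picked in round `m n - j` (0-indexed round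
`m n - 1 - j`) and never picked afterwards; for `j ≥ m n`, the number of cards of
initial pile `j - m n` never picked at all.  Then, for all large `n`, the sorted
configuration `λ⁽ᵐ⁾ = ord α` satisfies
`P(‖∂^{1/p} λ⁽ᵐ⁾ - e^{-x}‖_∞ ≤ ε) ≥ 1 - exp(-(ε²/(2+ε))·n·p·(1-δ))`. -/
theorem limit_shape_of_stochastic_bulgarian_solitaire
    (p : ℕ → ℝ) (hp : ∀ n, 0 < p n ∧ p n < 1)
    (hp0 : Tendsto p atTop (nhds 0))
    (hplog : Tendsto (fun n => p n / (Real.log n / n)) atTop atTop)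
    (ε δ : ℝ) (hε : 0 < ε) (hδ0 : 0 < δ) (hδ1 : δ < 1)
    (m : ℕ → ℕ) (hm : ∀ n, 0 < m n ∧ (ε ^ 2 / (2 + ε)) * n < m n) :
    ∃ N : ℕ, ∀ n, N ≤ n →
      ∀ (Ω : Type) (_ : MeasurableSpace Ω) (P : Measure Ω),
        IsProbabilityMeasure P →
        ∀ X : Fin n × Fin (m n) → Ω → ℕ,
          (∀ idx, Measurable (X idx)) →
          (∀ idx ω, X idx ω = 0 ∨ X idx ω = 1) →
          (∀ idx, P {ω | X idx ω = 1} = ENNReal.ofReal (p n)) →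
          iIndepFun X P →
          ∀ c : Fin n → ℕ,
            ENNReal.ofReal
                (1 - Real.exp (-(ε ^ 2 / (2 + ε)) * n * p n * (1 - δ))) ≤
              P {ω | ⨆ x : NNReal,
                  |rescaledBoundary n (1 / p n)
                      (ordC (fun j =>
                        if hj : j < m n then
                          Set.ncard {i : Fin n |
                            X (i, ⟨m n - 1 - j, by have := (hm n).1; omega⟩) ω = 1 ∧
                            ∀ s : Fin (m n), m n - 1 - j < (s : ℕ) → X (i, s) ω = 0}
                        else
                          Set.ncard {i : Fin n | c i = j - m n ∧
                            ∀ s : Fin (m n), X (i, s) ω = 0})) x -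
                    Real.exp (-(x : ℝ))| ≤ ε} := by
  set c0 : ℝ := ε ^ 2 / (2 + ε) with hc0
  have hc0pos : 0 < c0 := by positivity
  have hg : Tendsto (fun n => (ε - 3 * p n) ^ 2 / (2 + (ε - 3 * p n))) atTop (nhds c0) := by
    have h1 : Tendsto (fun n => ε - 3 * p n) atTop (nhds ε) := by
      simpa using (tendsto_const_nhds (x := ε)).sub (hp0.const_mul 3)
    exact (h1.pow 2).div (h1.const_add 2) (by positivity)
  have ev1 : ∀ᶠ n in atTop, c0 * (1 - δ / 2) < (ε - 3 * p n) ^ 2 / (2 + (ε - 3 * p n)) :=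
    hg.eventually_const_lt (by nlinarith)
  have ev2 : ∀ᶠ n in atTop, p n < min (1 / 2) (ε / 6) :=
    hp0.eventually_lt_const (by positivity)
  have ev3 : ∀ᶠ n in atTop, 4 / (c0 * δ) ≤ p n / (Real.log n / n) :=
    hplog.eventually_ge_atTop _
  have ev4 : ∀ᶠ n : ℕ in atTop, max 2 (max (2 * c0 + 3) (6 / ε)) ≤ (n : ℝ) :=
    tendsto_natCast_atTop_atTop.eventually_ge_atTop _
  obtain ⟨N, hN⟩ := eventually_atTop.1 (ev1.and (ev2.and (ev3.and ev4)))
  refine ⟨N, fun n hn Ω _ P hP X hX h01 hXp hI c => ?_⟩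
  obtain ⟨e1, e2, e3, e4⟩ := hN n hn
  obtain ⟨hm0, hmc⟩ := hm n
  obtain ⟨hpp, hp1⟩ := hp n
  obtain ⟨e2a, e2b⟩ := lt_min_iff.1 e2
  obtain ⟨e4a, e4'⟩ := max_le_iff.1 e4
  obtain ⟨e4b, e4c⟩ := max_le_iff.1 e4'
  have hn0 : (0:ℝ) < n := by linarith
  have hlog : 0 < Real.log n := Real.log_pos (by linarith)
  set ν : ℝ := n * p n with hν
  have hνpos : 0 < ν := by positivity
  have hνlog : 2 * Real.log n ≤ c0 * δ / 2 * ν := by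
    rw [le_div_iff₀ (by positivity)] at e3
    have h2 : 4 / (c0 * δ) * (Real.log n / n) * n ≤ p n * n := by gcongr
    have h3 : 4 / (c0 * δ) * (Real.log n / n) * n * (c0 * δ / 2) = 2 * Real.log n := by
      field_simp; norm_num
    rw [← h3, hν, mul_comm (n:ℝ) (p n), mul_comm (c0 * δ / 2)]
    gcongr
  have hn2 : (n:ℝ) * n ≤ Real.exp (c0 * δ / 2 * ν) := by
    calc (n:ℝ) * n = Real.exp (2 * Real.log n) := by
          rw [two_mul, Real.exp_add, Real.exp_log hn0]
      _ ≤ _ := Real.exp_le_exp.2 hνlog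
  set J := ⌊c0 * n⌋₊ with hJ
  have hJle : (J:ℝ) ≤ c0 * n := Nat.floor_le (by positivity)
  have hJM : J ≤ m n := by
    have : (J:ℝ) < m n := lt_of_le_of_lt hJle hmc
    exact_mod_cast this.le
  have hJge : c0 * n - 1 ≤ J := (Nat.sub_one_lt_floor _).le
  have hqJ : (1 - p n) ^ J ≤ 3 * Real.exp (-(c0 * ν)) := by
    calc (1 - p n) ^ J ≤ (Real.exp (-p n)) ^ J :=
          pow_le_pow_left₀ (by linarith) (Real.one_sub_le_exp_neg _) J
      _ = Real.exp (-(J * p n)) := by rw [← Real.exp_nat_mul]; ring_nf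
      _ ≤ Real.exp (1 + -(c0 * ν)) := by
          refine Real.exp_le_exp.2 ?_
          have : (c0 * n - 1) * p n ≤ J * p n := by gcongr
          rw [hν]; nlinarith
      _ = Real.exp 1 * Real.exp (-(c0 * ν)) := Real.exp_add _ _
      _ ≤ _ := by gcongr; exact Real.exp_one_lt_three.le
  set e := ε - 3 * p n with he
  have he2 : ε / 2 < e := by linarith
  have hepos : 0 < e := by linarith
  have hqe : (1 - p n) ^ J ≤ e := by
    refine hqJ.trans (le_trans ?_ he2.le)
    have h1 : Real.exp (-(c0 * ν)) * Real.exp (c0 * δ / 2 * ν) ≤ 1 := by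
      rw [← Real.exp_add, Real.exp_le_one_iff]
      have : 0 < c0 * ν := by positivity
      nlinarith
    have h2 : Real.exp (-(c0 * ν)) * n ≤ 1 := by
      refine le_trans ?_ h1
      gcongr
      nlinarith
    have h3 : 6 ≤ n * ε := by rwa [div_le_iff₀ hε] at e4c
    have h4 := Real.exp_pos (-(c0 * ν))
    nlinarith
  have hbad := bs_bad P n (m n) hm0 X hX h01 (p n) hpp hp1 hXp hI c e hepos J hJM
  set bad := (⋃ j ∈ Finset.range J,
      {ω | e * (n * p n) ≤
        |(bsAlpha n (m n) hm0 X c ω j : ℝ) - n * (p n * (1 - p n) ^ j)|}) ∪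
      ⋃ i ∈ (Finset.univ : Finset (Fin n)),
        {ω | ∀ s : Fin (m n), m n - J ≤ (s : ℕ) → X (i, s) ω = 0} with hbaddef
  have hbound : P.real bad ≤ Real.exp (-(ε ^ 2 / (2 + ε)) * n * p n * (1 - δ)) := by
    set E := Real.exp (-(c0 * (1 - δ / 2) * ν)) with hE
    have hEpos : 0 < E := Real.exp_pos _
    have b1 : Real.exp (-(e ^ 2 / (2 + e)) * ν) ≤ E := by
      refine Real.exp_le_exp.2 ?_
      nlinarith
    have b2 : Real.exp (-(c0 * ν)) ≤ E := by
      refine Real.exp_le_exp.2 ?_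
      have : 0 < c0 * ν := by positivity
      nlinarith
    calc P.real bad ≤ _ := hbad
      _ ≤ (c0 * n) * (2 * E) + n * (3 * E) := by
          gcongr
          exact hqJ.trans (by linarith)
      _ = ((2 * c0 + 3) * n) * E := by ring
      _ ≤ Real.exp (c0 * δ / 2 * ν) * E := by
          gcongr
          refine le_trans ?_ hn2
          gcongr
      _ = _ := by
          rw [hE, ← Real.exp_add, hν]; congr 1; ring
  have hsub : badᶜ ⊆ {ω | ⨆ x : NNReal,
      |rescaledBoundary n (1 / p n) (ordC (bsAlpha n (m n) hm0 X c ω)) x -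
        Real.exp (-(x : ℝ))| ≤ ε} := by
    intro ω hω
    have := bs_good n (m n) (by exact_mod_cast hn0) hm0 X (p n) hpp e2a.le c e J hJM hqe ω hω
    have h2 : e + 3 * p n = ε := by rw [he]; ring
    rw [h2] at this
    exact this
  refine le_trans ?_ (measure_mono (μ := P) hsub)
  have hcov : (1 : ENNReal) ≤ P bad + P badᶜ := by
    calc (1 : ENNReal) = P (bad ∪ badᶜ) := by rw [Set.union_compl_self, measure_univ]
      _ ≤ _ := measure_union_le _ _
  have hbad' : P bad ≤ ENNReal.ofReal (Real.exp (-(ε ^ 2 / (2 + ε)) * n * p n * (1 - δ))) := by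
    rw [← ofReal_measureReal]
    exact ENNReal.ofReal_le_ofReal hbound
  rw [ENNReal.ofReal_sub _ (Real.exp_pos _).le, ENNReal.ofReal_one, tsub_le_iff_left]
  exact hcov.trans (by gcongr)
end

section
/- For each positive integer n let p = p(n) ∈ (0,1) satisfy p → 0 and p/((log n)/n) → ∞ as n → ∞. Let K_n be the Markov transition kernel on the set P(n) of integer partitions of n defined by one round of the card-based stochastic Bulgarian solitaire with probability p: given λ = (λ_1, …, λ_ℓ) ∈ P(n), draw independent random variables B_j ~ Bin(λ_j, p) for j = 1, …, ℓ, and move to the partition obtained by sorting the sequence (Σ_{j=1}^ℓ B_j, λ_1 − B_1, …, λ_ℓ − B_ℓ) in weakly decreasing order and discarding zero parts. Let π_{p,n} be a probability distribution on P(n) that is invariant under K_n (i.e., the pushforward of π_{p,n} under one step of K_n equals π_{p,n}). Then for every ε > 0 and every δ ∈ (0,1) there exists N such that for all n ≥ N, π_{p,n}({λ ∈ P(n) : sup_{x≥0} |∂^{1/p} λ(x) − e^{−x}| ≤ ε}) ≥ 1 − exp(−(ε²/(2+ε))·n·p·(1−δ)). -/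
open Filter

/-- Transition probability of one round of the card-based stochastic Bulgarian solitaire
with pick-probability `p`, from the partition `l` to the partition `l'`: draw
independent `b j ~ Bin(l j, p)` from each pile `l j`, form the configuration
`(Σⱼ b j, l 0 - b 0, l 1 - b 1, …)` and sort it in weakly decreasing order.
(For `j` with `l j = 0` necessarily `b j = 0` and the corresponding factor is `1`.) -/
noncomputable def stepProb (p : ℝ) (l l' : ℕ → ℕ) : ℝ :=
  ∑ᶠ b ∈ {b : ℕ → ℕ | (∀ j, b j ≤ l j) ∧
      ordC (fun j => if j = 0 then ∑ᶠ i, b i else l (j - 1) - b (j - 1)) = l'},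
    ∏ᶠ j, ((l j).choose (b j) : ℝ) * p ^ (b j) * (1 - p) ^ (l j - b j)


namespace SBS

/-- Finite support. -/
def FS (c : ℕ → ℕ) : Prop := (Function.support c).Finite

lemma FS.bound {c : ℕ → ℕ} (h : FS c) : ∃ M, ∀ j, M ≤ j → c j = 0 := by
  obtain ⟨M, hM⟩ := h.bddAbove
  refine ⟨M + 1, fun j hj => ?_⟩
  by_contra hne
  have := hM (Function.mem_support.2 hne)
  omega

lemma FS.of_bound {c : ℕ → ℕ} {M : ℕ} (h : ∀ j, M ≤ j → c j = 0) : FS c := by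
  refine (Set.finite_lt_nat M).subset fun j hj => ?_
  by_contra hne
  exact hj (h j (by simpa using hne))

lemma FS.mono {b c : ℕ → ℕ} (h : FS c) (hb : b ≤ c) : FS b := by
  obtain ⟨M, hM⟩ := h.bound
  exact FS.of_bound (M := M) fun j hj => by have : b j ≤ c j := hb j; have := hM j hj; omega

lemma FS.finite_Iic {c : ℕ → ℕ} (h : FS c) : (Set.Iic c).Finite := by
  have h1 : (Set.Iic (Finsupp.ofSupportFinite c h)).Finite := Set.finite_Iic _
  refine (h1.image (fun f : ℕ →₀ ℕ => (f : ℕ → ℕ))).subset ?_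
  intro b hb
  exact ⟨Finsupp.ofSupportFinite b (h.mono hb), fun j => hb j, rfl⟩

lemma FS.comp {c : ℕ → ℕ} (h : FS c) (σ : Equiv.Perm ℕ) : FS (c ∘ σ) := by
  have : Function.support (c ∘ σ) = σ ⁻¹' Function.support c := rfl
  unfold FS
  rw [this]
  exact Set.Finite.preimage σ.injective.injOn h

lemma finsum_range {c : ℕ → ℕ} {M : ℕ} (h : ∀ j, M ≤ j → c j = 0) :
    ∑ᶠ i, c i = ∑ i ∈ Finset.range M, c i := by
  refine finsum_eq_sum_of_support_subset _ fun j hj => ?_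
  by_contra hne
  exact hj (h j (by simpa using hne))

lemma finprod_range {c : ℕ → ℝ} {M : ℕ} (h : ∀ j, M ≤ j → c j = 1) :
    ∏ᶠ i, c i = ∏ i ∈ Finset.range M, c i := by
  refine finprod_eq_prod_of_mulSupport_subset _ fun j hj => ?_
  by_contra hne
  exact hj (h j (by simpa using hne))

open Classical in
/-- choices below `c` -/
noncomputable def B (c : ℕ → ℕ) : Finset (ℕ → ℕ) :=
  if h : (Set.Iic c).Finite then h.toFinset else ∅

lemma mem_B {c : ℕ → ℕ} (h : FS c) {b : ℕ → ℕ} : b ∈ B c ↔ b ≤ c := by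
  simp [B, h.finite_Iic]

lemma le_of_mem_B {c b : ℕ → ℕ} (h : b ∈ B c) : b ≤ c := by
  unfold B at h
  split_ifs at h with h1
  · simpa using h
  · simp at h

noncomputable def step (c b : ℕ → ℕ) : ℕ → ℕ :=
  fun j => if j = 0 then ∑ᶠ i, b i else c (j - 1) - b (j - 1)

noncomputable def wt (p : ℝ) (c b : ℕ → ℕ) : ℝ :=
  ∏ᶠ j, ((c j).choose (b j) : ℝ) * p ^ (b j) * (1 - p) ^ (c j - b j)

lemma wt_nonneg {p : ℝ} (h0 : 0 ≤ p) (h1 : p ≤ 1) (c b : ℕ → ℕ) : 0 ≤ wt p c b := by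
  refine finprod_nonneg fun j => ?_
  have : 0 ≤ 1 - p := by linarith
  positivity

lemma step_bound {c b : ℕ → ℕ} {M : ℕ} (h : ∀ j, M ≤ j → c j = 0) :
    ∀ j, M + 1 ≤ j → step c b j = 0 := by
  intro j hj
  unfold step
  rw [if_neg (by omega), h (j-1) (by omega)]
  simp

lemma step_FS {c : ℕ → ℕ} (h : FS c) (b : ℕ → ℕ) : FS (step c b) := by
  obtain ⟨M, hM⟩ := h.bound
  exact FS.of_bound (step_bound hM)

lemma step_sum {c b : ℕ → ℕ} (h : FS c) (hb : b ≤ c) : ∑ᶠ i, step c b i = ∑ᶠ i, c i := by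
  obtain ⟨M, hM⟩ := h.bound
  rw [finsum_range (step_bound hM), finsum_range hM, Finset.sum_range_succ']
  simp only [step, if_true, Nat.add_sub_cancel, Nat.succ_ne_zero, if_false]
  rw [finsum_range (c := b) (M := M) (fun j hj => by have : b j ≤ c j := hb j; have := hM j hj; omega),
    ← Finset.sum_add_distrib]
  exact Finset.sum_congr rfl fun j _ => Nat.sub_add_cancel (hb j)

/-- transition operator -/
noncomputable def T (p : ℝ) : Module.End ℝ ((ℕ → ℕ) → ℝ) where
  toFun f := fun c => ∑ b ∈ B c, wt p c b * f (step c b)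
  map_add' f g := by
    funext c
    simp [mul_add, Finset.sum_add_distrib]
  map_smul' a f := by
    funext c
    simp only [Pi.smul_apply, smul_eq_mul, RingHom.id_apply, Finset.mul_sum]
    exact Finset.sum_congr rfl fun b _ => by ring

lemma T_apply (p : ℝ) (f : (ℕ → ℕ) → ℝ) (c : ℕ → ℕ) :
    T p f c = ∑ b ∈ B c, wt p c b * f (step c b) := rfl

lemma T_mono {p : ℝ} (h0 : 0 ≤ p) (h1 : p ≤ 1) {f g : (ℕ → ℕ) → ℝ}
    (h : ∀ c, FS c → f c ≤ g c) : ∀ c, FS c → T p f c ≤ T p g c := by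
  intro c hc
  rw [T_apply, T_apply]
  exact Finset.sum_le_sum fun b _ =>
    mul_le_mul_of_nonneg_left (h _ (step_FS hc b)) (wt_nonneg h0 h1 c b)

lemma Tpow_mono {p : ℝ} (h0 : 0 ≤ p) (h1 : p ≤ 1) (m : ℕ) {f g : (ℕ → ℕ) → ℝ}
    (h : ∀ c, FS c → f c ≤ g c) : ∀ c, FS c → (T p ^ m) f c ≤ (T p ^ m) g c := by
  induction m generalizing f g with
  | zero => simpa using h
  | succ m ih =>
    intro c hc
    rw [pow_succ, Module.End.mul_apply, Module.End.mul_apply]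
    exact ih (T_mono h0 h1 h) c hc

/-- monomials -/
noncomputable def H (z : ℕ → ℝ) (c : ℕ → ℕ) : ℝ := ∏ᶠ j, z j ^ c j

lemma H_range (z : ℕ → ℝ) {c : ℕ → ℕ} {M : ℕ} (h : ∀ j, M ≤ j → c j = 0) :
    H z c = ∏ j ∈ Finset.range M, z j ^ c j :=
  finprod_range fun j hj => by simp [h j hj]

lemma sum_B {c : ℕ → ℕ} {M : ℕ} (h : ∀ j, M ≤ j → c j = 0) (G : ℕ → ℕ → ℝ) :
    ∑ b ∈ B c, ∏ j ∈ Finset.range M, G j (b j)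
      = ∏ j ∈ Finset.range M, ∑ k ∈ Finset.range (c j + 1), G j k := by
  have hc : FS c := FS.of_bound h
  rw [Finset.prod_sum]
  refine Finset.sum_bij' (fun b _ => fun j _ => b j)
    (fun q _ => fun j => if hj : j ∈ Finset.range M then q j hj else 0) ?_ ?_ ?_ ?_ ?_
  · intro b hb
    rw [mem_B hc] at hb
    simp only [Finset.mem_pi, Finset.mem_range]
    intro j _
    have : b j ≤ c j := hb j
    omega
  · intro q hq
    rw [mem_B hc]
    intro j
    by_cases hj : j ∈ Finset.range M
    · have := Finset.mem_pi.1 hq j hj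
      simp only [Finset.mem_range] at this
      simp only [hj, dif_pos]
      omega
    · simp [hj]
  · intro b hb
    rw [mem_B hc] at hb
    funext j
    by_cases hj : j ∈ Finset.range M
    · simp [hj]
    · have : b j ≤ c j := hb j
      have := h j (by simpa using hj)
      simp only [hj, dif_neg, not_false_eq_true]
      omega
  · intro q hq
    funext j hj
    simp [hj]
  · intro b hb
    exact (Finset.prod_attach (Finset.range M) (fun j => G j (b j))).symm

/-- action on weights -/
def A (p : ℝ) (z : ℕ → ℝ) : ℕ → ℝ := fun j => p * z 0 + (1 - p) * z (j + 1)

lemma T_H (p : ℝ) (z : ℕ → ℝ) {c : ℕ → ℕ} (hc : FS c) : T p (H z) c = H (A p z) c := by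
  obtain ⟨M, hM⟩ := hc.bound
  rw [T_apply, H_range _ hM]
  have key : ∀ b ∈ B c, wt p c b * H z (step c b) = ∏ j ∈ Finset.range M,
      (((p * z 0) ^ (b j) * ((1 - p) * z (j + 1)) ^ (c j - b j)) * ((c j).choose (b j) : ℝ)) := by
    intro b hb
    have hb' := le_of_mem_B hb
    have hbM : ∀ j, M ≤ j → b j = 0 := fun j hj => by have : b j ≤ c j := hb' j; have := hM j hj; omega
    rw [H_range _ (step_bound hM), Finset.prod_range_succ', wt,
      finprod_range (M := M) (fun j hj => by simp [hM j hj, hbM j hj])]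
    simp only [step, if_true, Nat.add_sub_cancel, Nat.succ_ne_zero, if_false]
    rw [finsum_range hbM, ← Finset.prod_pow_eq_pow_sum, ← Finset.prod_mul_distrib,
      ← Finset.prod_mul_distrib]
    exact Finset.prod_congr rfl fun j _ => by rw [mul_pow, mul_pow]; ring
  rw [Finset.sum_congr rfl key, sum_B hM (fun j k => ((p * z 0) ^ k *
    ((1 - p) * z (j + 1)) ^ (c j - k)) * ((c j).choose k : ℝ))]
  exact Finset.prod_congr rfl fun j _ => by rw [A, add_pow]

lemma T_congr (p : ℝ) {f g : (ℕ → ℕ) → ℝ}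
    (h : ∀ c, FS c → f c = g c) : ∀ c, FS c → T p f c = T p g c := by
  intro c hc
  rw [T_apply, T_apply]
  exact Finset.sum_congr rfl fun b _ => by rw [h _ (step_FS hc b)]

lemma Tpow_H (p : ℝ) (z : ℕ → ℝ) (m : ℕ) :
    ∀ c, FS c → (T p ^ m) (H z) c = H ((A p)^[m] z) c := by
  induction m with
  | zero => intro c _; simp
  | succ m ih =>
    intro c hc
    rw [pow_succ', Module.End.mul_apply, T_congr p ih c hc, T_H p _ hc,
      Function.iterate_succ_apply']

lemma H_const (s : ℝ) {c : ℕ → ℕ} (hc : FS c) : H (fun _ => s) c = s ^ (∑ᶠ i, c i) := by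
  obtain ⟨M, hM⟩ := hc.bound
  rw [H_range _ hM, finsum_range hM, Finset.prod_pow_eq_pow_sum]

/-- symmetric functions -/
def Sym (f : (ℕ → ℕ) → ℝ) : Prop := ∀ c, FS c → ∀ σ : Equiv.Perm ℕ, f (c ∘ σ) = f c

def shiftFun (f : ℕ → ℕ) : ℕ → ℕ := fun j => if j = 0 then 0 else f (j - 1) + 1

def shiftPerm (σ : Equiv.Perm ℕ) : Equiv.Perm ℕ where
  toFun := shiftFun σ
  invFun := shiftFun σ.symm
  left_inv j := by cases j <;> simp [shiftFun]
  right_inv j := by cases j <;> simp [shiftFun]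

lemma step_comp (c b : ℕ → ℕ) (σ : Equiv.Perm ℕ) :
    step (c ∘ σ) (b ∘ σ) = step c b ∘ shiftPerm σ := by
  funext j
  cases j with
  | zero =>
    simp only [step, shiftPerm, shiftFun, Equiv.coe_fn_mk, Function.comp, if_true]
    exact finsum_comp_equiv σ (f := b)
  | succ j => simp [step, shiftPerm, shiftFun]

lemma wt_comp (p : ℝ) (c b : ℕ → ℕ) (σ : Equiv.Perm ℕ) :
    wt p (c ∘ σ) (b ∘ σ) = wt p c b :=
  finprod_comp_equiv σ (f := fun j => ((c j).choose (b j) : ℝ) * p ^ (b j) * (1 - p) ^ (c j - b j))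

lemma T_sym (p : ℝ) {f : (ℕ → ℕ) → ℝ} (hf : Sym f) : Sym (T p f) := by
  intro c hc σ
  rw [T_apply, T_apply]
  refine (Finset.sum_bij' (fun b _ => b ∘ σ) (fun b _ => b ∘ σ.symm) ?_ ?_ ?_ ?_ ?_).symm
  · intro b hb
    rw [mem_B hc] at hb
    rw [mem_B (hc.comp σ)]
    exact fun j => hb (σ j)
  · intro b hb
    rw [mem_B (hc.comp σ)] at hb
    rw [mem_B hc]
    intro j
    have := hb (σ.symm j)
    simpa using this
  · intro b _; funext j; simp
  · intro b _; funext j; simp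
  · intro b _
    rw [wt_comp, step_comp, hf _ (step_FS hc b)]

lemma Tpow_sym (p : ℝ) {f : (ℕ → ℕ) → ℝ} (hf : Sym f) (m : ℕ) : Sym ((T p ^ m) f) := by
  induction m with
  | zero => simpa using hf
  | succ m ih =>
    rw [pow_succ', Module.End.mul_apply]
    exact T_sym p ih

lemma ordC_comp (c : ℕ → ℕ) (σ : Equiv.Perm ℕ) : ordC (c ∘ σ) = ordC c := by
  funext k
  unfold ordC
  congr 1
  ext m
  constructor
  · rintro ⟨s, hs, h⟩
    refine ⟨s.map σ.toEmbedding, by simpa using hs, ?_⟩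
    intro i hi
    obtain ⟨j, hj, rfl⟩ := Finset.mem_map.1 hi
    exact h j hj
  · rintro ⟨s, hs, h⟩
    refine ⟨s.map σ.symm.toEmbedding, by simpa using hs, ?_⟩
    intro i hi
    obtain ⟨j, hj, rfl⟩ := Finset.mem_map.1 hi
    simpa using h j hj

lemma exists_ge (s : Finset ℕ) (k : ℕ) (h : s.card = k + 1) : ∃ i ∈ s, k ≤ i := by
  by_contra! hc
  have : s ⊆ Finset.range k := fun i hi => Finset.mem_range.2 (hc i hi)
  have := Finset.card_le_card this
  simp at this
  omega

lemma ordC_bdd {c : ℕ → ℕ} (h : FS c) (k : ℕ) :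
    BddAbove {m : ℕ | ∃ s : Finset ℕ, s.card = k + 1 ∧ ∀ i ∈ s, m ≤ c i} := by
  obtain ⟨M, hM⟩ := h.bound
  refine ⟨∑ i ∈ Finset.range M, c i, ?_⟩
  rintro m ⟨s, hs, hm⟩
  obtain ⟨i, hi, -⟩ := exists_ge s k hs
  refine (hm i hi).trans ?_
  by_cases hiM : i < M
  · exact Finset.single_le_sum (f := c) (fun _ _ => Nat.zero_le _) (Finset.mem_range.2 hiM)
  · rw [hM i (by omega)]; exact Nat.zero_le _

lemma ordC_mem {c : ℕ → ℕ} (h : FS c) (k : ℕ) :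
    ∃ s : Finset ℕ, s.card = k + 1 ∧ ∀ i ∈ s, ordC c k ≤ c i :=
  Nat.sSup_mem (s := {m : ℕ | ∃ s : Finset ℕ, s.card = k + 1 ∧ ∀ i ∈ s, m ≤ c i})
    ⟨0, Finset.range (k + 1), by simp, by simp⟩ (ordC_bdd h k)

lemma le_ordC {c : ℕ → ℕ} (h : FS c) (k m : ℕ) (s : Finset ℕ) (hs : s.card = k + 1)
    (hm : ∀ i ∈ s, m ≤ c i) : m ≤ ordC c k :=
  le_csSup (ordC_bdd h k) ⟨s, hs, hm⟩

lemma ordC_close {c : ℕ → ℕ} (h : FS c) {d : ℕ → ℝ} (hd : Antitone d) {t : ℝ}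
    (hcd : ∀ i, |(c i : ℝ) - d i| ≤ t) (k : ℕ) : |(ordC c k : ℝ) - d k| ≤ t := by
  rw [abs_le]
  constructor
  · have : ⌈d k - t⌉₊ ≤ ordC c k := by
      refine le_ordC h k _ (Finset.range (k + 1)) (by simp) fun i hi => ?_
      rw [Nat.ceil_le]
      have h1 := (abs_le.1 (hcd i)).1
      have h2 : d k ≤ d i := hd (by simp at hi; omega)
      linarith
    have := Nat.ceil_le.1 this
    linarith
  · obtain ⟨s, hs, hm⟩ := ordC_mem h k
    obtain ⟨i, hi, hki⟩ := exists_ge s k hs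
    have h1 := (abs_le.1 (hcd i)).2
    have h2 : d i ≤ d k := hd hki
    have h3 : (ordC c k : ℝ) ≤ c i := by exact_mod_cast hm i hi
    linarith

lemma ordC_of_antitone {c : ℕ → ℕ} (h : FS c) (hc : Antitone c) : ordC c = c := by
  funext k
  have := ordC_close h (d := fun i => (c i : ℝ)) (fun i j hij => Nat.cast_le.2 (hc hij))
    (t := 0) (by simp) k
  have := abs_nonpos_iff.1 this
  exact_mod_cast sub_eq_zero.1 this

lemma exists_sort {c : ℕ → ℕ} (h : FS c) : ∃ σ : Equiv.Perm ℕ, Antitone (c ∘ σ) := by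
  obtain ⟨M, hM⟩ := h.bound
  let g : Fin M → ℕᵒᵈ := fun i => OrderDual.toDual (c i)
  have hg := Tuple.monotone_sort g
  let σ : Equiv.Perm ℕ := (Tuple.sort g).extendDomain (Fin.equivSubtype (n := M))
  have h1 : ∀ j (hj : j < M), σ j = (Tuple.sort g ⟨j, hj⟩ : ℕ) := by
    intro j hj
    exact Equiv.Perm.extendDomain_apply_subtype (Tuple.sort g) (Fin.equivSubtype (n := M)) hj
  have h2 : ∀ j, ¬ j < M → σ j = j := by
    intro j hj
    exact Equiv.Perm.extendDomain_apply_not_subtype _ _ hj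
  refine ⟨σ, ?_⟩
  intro i j hij
  by_cases hj : j < M
  · have hi : i < M := by omega
    simp only [Function.comp, h1 _ hj, h1 _ hi]
    exact hg (show (⟨i, hi⟩ : Fin M) ≤ ⟨j, hj⟩ from hij)
  · simp only [Function.comp, h2 _ hj]
    rw [hM j (by omega)]
    exact Nat.zero_le _

lemma ordC_eq_comp {c : ℕ → ℕ} (h : FS c) :
    ∃ σ : Equiv.Perm ℕ, ordC c = c ∘ σ ∧ Antitone (c ∘ σ) := by
  obtain ⟨σ, hσ⟩ := exists_sort h
  exact ⟨σ, by rw [← ordC_comp c σ, ordC_of_antitone (h.comp σ) hσ], hσ⟩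

lemma Sym.ordC {f : (ℕ → ℕ) → ℝ} (hf : Sym f) {c : ℕ → ℕ} (h : FS c) : f (ordC c) = f c := by
  obtain ⟨σ, hσ, -⟩ := ordC_eq_comp h
  rw [hσ, hf c h]

lemma ordC_part {c : ℕ → ℕ} (h : FS c) : IsPartitionOf (∑ᶠ i, c i) (ordC c) := by
  obtain ⟨σ, hσ, hanti⟩ := ordC_eq_comp h
  rw [hσ]
  exact ⟨⟨h.comp σ, finsum_comp_equiv σ (f := c)⟩, hanti⟩

lemma part_finite (n : ℕ) : {l : ℕ → ℕ | IsPartitionOf n l}.Finite := by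
  have h : FS (fun j => if j < n then n else 0) :=
    FS.of_bound (M := n) fun j hj => by simp; omega
  refine h.finite_Iic.subset ?_
  rintro l ⟨⟨hf, hs⟩, ha⟩ j
  have hle : ∀ j, l j ≤ n := by
    intro j
    obtain ⟨M, hM⟩ := FS.bound hf
    rw [finsum_range hM] at hs
    by_cases hj : j < M
    · rw [← hs]
      exact Finset.single_le_sum (f := l) (fun _ _ => Nat.zero_le _) (Finset.mem_range.2 hj)
    · rw [hM j (by omega)]; exact Nat.zero_le _
  by_cases hj : j < n
  · simpa [hj] using hle j
  · simp only [hj, if_false]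
    by_contra hne
    have hpos : 1 ≤ l j := by omega
    obtain ⟨M, hM⟩ := FS.bound hf
    have hjM : j < M := by
      by_contra hh
      have := hM j (by omega)
      omega
    rw [finsum_range hM] at hs
    have h1 : ∑ i ∈ Finset.range (j + 1), l i ≤ ∑ i ∈ Finset.range M, l i :=
      Finset.sum_le_sum_of_subset (fun i hi => by simp at hi ⊢; omega)
    have h2 : ∑ i ∈ Finset.range (j + 1), 1 ≤ ∑ i ∈ Finset.range (j + 1), l i :=
      Finset.sum_le_sum fun i hi => hpos.trans (ha (by simp at hi; omega))
    simp at h2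
    omega

lemma stepProb_eq (p : ℝ) {l : ℕ → ℕ} (hl : FS l) (l' : ℕ → ℕ) [DecidableEq (ℕ → ℕ)] :
    stepProb p l l' = ∑ b ∈ (B l).filter (fun b => ordC (step l b) = l'), wt p l b := by
  unfold stepProb
  refine finsum_mem_eq_sum_of_inter_support_eq _ ?_
  ext b
  simp only [Set.mem_inter_iff, Set.mem_ofPred_eq, Finset.coe_filter, mem_B hl]
  rfl

lemma stat {n : ℕ} {p : ℝ} {π : (ℕ → ℕ) → ℝ}
    (hs : ∀ l', IsPartitionOf n l' →
      ∑ᶠ l ∈ {l : ℕ → ℕ | IsPartitionOf n l}, π l * stepProb p l l' = π l')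
    {f : (ℕ → ℕ) → ℝ} (hf : Sym f) :
    ∑ l ∈ (part_finite n).toFinset, π l * f l = ∑ l ∈ (part_finite n).toFinset, π l * T p f l := by
  classical
  have e1 : ∀ l' ∈ (part_finite n).toFinset, π l' * f l' =
      ∑ l ∈ (part_finite n).toFinset, π l * stepProb p l l' * f l' := by
    intro l' hl'
    have hl'' : IsPartitionOf n l' := by simpa using hl'
    rw [← Finset.sum_mul, ← finsum_mem_eq_finite_toFinset_sum _ (part_finite n), hs l' hl'']
  rw [Finset.sum_congr rfl e1, Finset.sum_comm]
  refine Finset.sum_congr rfl fun l hl => ?_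
  have hl1 : IsPartitionOf n l := by simpa using hl
  have hl2 : FS l := hl1.1.1
  rw [T_apply]
  simp only [mul_assoc]
  rw [← Finset.mul_sum]
  congr 1
  rw [← Finset.sum_fiberwise_of_maps_to (s := B l) (t := (part_finite n).toFinset)
    (g := fun b => ordC (step l b))]
  · refine Finset.sum_congr rfl fun l' _ => ?_
    rw [stepProb_eq p hl2, Finset.sum_mul]
    refine Finset.sum_congr rfl fun b hb => ?_
    have := (Finset.mem_filter.1 hb).2
    rw [← hf.ordC (step_FS hl2 b), this]
  · intro b hb
    have := ordC_part (step_FS hl2 b)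
    rw [step_sum hl2 (le_of_mem_B hb), hl1.1.2] at this
    simpa using this

lemma stat_pow {n : ℕ} {p : ℝ} {π : (ℕ → ℕ) → ℝ}
    (hs : ∀ l', IsPartitionOf n l' →
      ∑ᶠ l ∈ {l : ℕ → ℕ | IsPartitionOf n l}, π l * stepProb p l l' = π l')
    {f : (ℕ → ℕ) → ℝ} (hf : Sym f) (m : ℕ) :
    ∑ l ∈ (part_finite n).toFinset, π l * f l =
      ∑ l ∈ (part_finite n).toFinset, π l * (T p ^ m) f l := by
  induction m with
  | zero => simp
  | succ m ih =>
    rw [ih, stat hs (Tpow_sym p hf m), pow_succ', Module.End.mul_apply]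


def sg (i : ℕ) (x : ℝ) : ℕ → ℝ := fun j => if j = i then 1 + x else 1

def tl (m : ℕ) (u : ℝ) : ℕ → ℝ := fun j => if j < m then 1 else 1 - u

lemma A_const (p y : ℝ) (m : ℕ) : (A p)^[m] (fun _ => y) = fun _ => y := by
  induction m with
  | zero => rfl
  | succ m ih =>
    rw [Function.iterate_succ_apply', ih]
    funext j
    simp only [A]
    ring

lemma A_sg (p x : ℝ) (i m : ℕ) (h : i < m) :
    (A p)^[m] (sg i x) = fun _ => 1 + p * (1 - p) ^ i * x := by
  induction i generalizing x m with
  | zero =>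
    obtain ⟨m, rfl⟩ : ∃ k, m = k + 1 := ⟨m - 1, by omega⟩
    rw [Function.iterate_succ_apply]
    have : A p (sg 0 x) = fun _ => 1 + p * (1 - p) ^ 0 * x := by
      funext j
      simp [A, sg]
      ring
    rw [this, A_const]
  | succ i ih =>
    obtain ⟨m, rfl⟩ : ∃ k, m = k + 1 := ⟨m - 1, by omega⟩
    rw [Function.iterate_succ_apply]
    have : A p (sg (i + 1) x) = sg i ((1 - p) * x) := by
      funext j
      by_cases hj : j = i
      · simp [A, sg, hj]; ring
      · simp [A, sg, hj]
    rw [this, ih _ m (by omega)]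
    funext j
    ring

lemma A_tl (p u : ℝ) (m : ℕ) :
    (A p)^[m] (tl m u) = fun _ => 1 - (1 - p) ^ m * u := by
  induction m generalizing u with
  | zero => funext j; simp [tl]
  | succ m ih =>
    rw [Function.iterate_succ_apply]
    have : A p (tl (m + 1) u) = tl m ((1 - p) * u) := by
      funext j
      by_cases hj : j < m
      · simp [A, tl, hj]
      · simp [A, tl, hj]; ring
    rw [this, ih]
    funext j
    ring

lemma H_sg (i : ℕ) (x : ℝ) (c : ℕ → ℕ) : H (sg i x) c = (1 + x) ^ c i := by
  unfold H
  rw [finprod_eq_single _ i (fun j hj => by simp [sg, hj])]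
  simp [sg]

lemma H_tl_le (m : ℕ) {c : ℕ → ℕ} (hc : FS c) : H (tl m 1) c ≤ 1 := by
  obtain ⟨M, hM⟩ := hc.bound
  rw [H_range _ hM]
  refine Finset.prod_le_one (fun j _ => ?_) (fun j _ => ?_)
  · unfold tl; split_ifs <;> simp
  · unfold tl; split_ifs <;> simp
    exact pow_le_one₀ le_rfl zero_le_one

lemma H_tl_zero (m : ℕ) {c : ℕ → ℕ} (hc : FS c) {j : ℕ} (hj : m ≤ j) (hne : c j ≠ 0) :
    H (tl m 1) c = 0 := by
  obtain ⟨M, hM⟩ := hc.bound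
  have hjM : j < M := by
    by_contra hh
    exact hne (hM j (by omega))
  rw [H_range _ hM]
  refine Finset.prod_eq_zero (Finset.mem_range.2 hjM) ?_
  have : ¬ j < m := by omega
  simp [tl, this, hne]

open Classical in
noncomputable def bad (n : ℕ) (p e : ℝ) (c : ℕ → ℕ) : ℝ :=
  if ∀ k, |(ordC c k : ℝ) - n * p * (1 - p) ^ k| ≤ e * (n * p) then 0 else 1

lemma bad_sym (n : ℕ) (p e : ℝ) : Sym (bad n p e) := by
  intro c _ σ
  unfold bad
  rw [ordC_comp]

noncomputable def ga (n : ℕ) (p e : ℝ) (i : ℕ) : ℝ :=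
  Real.exp (-(Real.log (1 + e) * (n * (p * (1 - p) ^ i) + e * (n * p))))

noncomputable def gb (n : ℕ) (p e : ℝ) (i : ℕ) : ℝ :=
  Real.exp (Real.log (1 + e) * (n * (p * (1 - p) ^ i) - e * (n * p)))

noncomputable def G (n : ℕ) (p e : ℝ) (m : ℕ) : (ℕ → ℕ) → ℝ :=
  ∑ i ∈ Finset.range m, (ga n p e i • H (sg i e) + gb n p e i • H (sg i (-(e / (1 + e)))))
    + (H (fun _ => 1) - H (tl m 1))

lemma pow_eq_exp {e : ℝ} (he : 0 < e) (k : ℕ) : (1 + e) ^ k = Real.exp (Real.log (1 + e) * k) := by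
  rw [mul_comm, Real.exp_nat_mul, Real.exp_log (by linarith)]

lemma pow_eq_exp' {e : ℝ} (he : 0 < e) (k : ℕ) :
    (1 + -(e / (1 + e))) ^ k = Real.exp (-(Real.log (1 + e) * k)) := by
  have : 1 + -(e / (1 + e)) = (1 + e)⁻¹ := by field_simp; ring
  rw [this, inv_pow, pow_eq_exp he, Real.exp_neg]

lemma G_apply (n : ℕ) (p e : ℝ) (m : ℕ) (c : ℕ → ℕ) : G n p e m c =
    ∑ i ∈ Finset.range m, (ga n p e i * H (sg i e) c + gb n p e i * H (sg i (-(e / (1 + e)))) c)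
    + (H (fun _ => 1) c - H (tl m 1) c) := by
  simp [G, Finset.sum_apply]

lemma bad_le_G (n : ℕ) {p e : ℝ} (hp0 : 0 < p) (hp1 : p < 1) (he : 0 < e) (m : ℕ)
    (hm : (1 - p) ^ m ≤ e) (c : ℕ → ℕ) (hc : FS c) : bad n p e c ≤ G n p e m c := by
  rw [G_apply]
  have hnp : 0 ≤ (n : ℝ) * p := by positivity
  have hθ : 0 < Real.log (1 + e) := Real.log_pos (by linarith)
  have h1 : ∀ i, 0 ≤ ga n p e i * H (sg i e) c := fun i => by
    rw [H_sg, ga]; positivity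
  have h2 : ∀ i, 0 ≤ gb n p e i * H (sg i (-(e / (1 + e)))) c := fun i => by
    rw [H_sg, pow_eq_exp' he, gb]; positivity
  have h3 : H (fun _ => 1) c = 1 := by rw [H_const _ hc, one_pow]
  have h4 := H_tl_le m hc
  have h5 : 0 ≤ ∑ i ∈ Finset.range m,
      (ga n p e i * H (sg i e) c + gb n p e i * H (sg i (-(e / (1 + e)))) c) :=
    Finset.sum_nonneg fun i _ => add_nonneg (h1 i) (h2 i)
  rw [h3]
  unfold bad
  split_ifs with hgood
  · linarith
  by_cases hz : ∃ j, m ≤ j ∧ c j ≠ 0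
  · obtain ⟨j, hj, hne⟩ := hz
    rw [H_tl_zero m hc hj hne]
    linarith
  push Not at hz
  have hex : ∃ i, ¬ |(c i : ℝ) - n * p * (1 - p) ^ i| ≤ e * (n * p) := by
    by_contra! hall
    refine hgood (ordC_close hc ?_ hall)
    intro i j hij
    exact mul_le_mul_of_nonneg_left
      (pow_le_pow_of_le_one (by linarith) (by linarith) hij) hnp
  obtain ⟨i, hi⟩ := hex
  have him : i < m := by
    by_contra hcon
    refine hi ?_
    rw [hz i (by omega)]
    have : (1 - p) ^ i ≤ (1 - p) ^ m :=
      pow_le_pow_of_le_one (by linarith) (by linarith) (by omega)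
    have h0 : 0 ≤ (1 - p) ^ i := pow_nonneg (by linarith) _
    rw [Nat.cast_zero, zero_sub, abs_neg, abs_of_nonneg (by positivity), mul_comm e]
    exact mul_le_mul_of_nonneg_left (this.trans hm) hnp
  have h6 : ga n p e i * H (sg i e) c + gb n p e i * H (sg i (-(e / (1 + e)))) c ≤
      ∑ i ∈ Finset.range m,
      (ga n p e i * H (sg i e) c + gb n p e i * H (sg i (-(e / (1 + e)))) c) :=
    Finset.single_le_sum (f := fun i => ga n p e i * H (sg i e) c
      + gb n p e i * H (sg i (-(e / (1 + e)))) c)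
      (fun i _ => add_nonneg (h1 i) (h2 i)) (Finset.mem_range.2 him)
  have h7 : 1 ≤ ga n p e i * H (sg i e) c + gb n p e i * H (sg i (-(e / (1 + e)))) c := by
    have h1i := h1 i
    have h2i := h2 i
    rw [not_le, lt_abs] at hi
    rcases hi with hi | hi
    · have : 1 ≤ ga n p e i * H (sg i e) c := by
        rw [H_sg, ga, pow_eq_exp he, ← Real.exp_add]
        refine Real.one_le_exp ?_
        have := mul_pos hθ (sub_pos.2 hi)
        nlinarith
      linarith
    · have : 1 ≤ gb n p e i * H (sg i (-(e / (1 + e)))) c := by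
        rw [H_sg, gb, pow_eq_exp' he, ← Real.exp_add]
        refine Real.one_le_exp ?_
        have := mul_pos hθ (sub_pos.2 hi)
        nlinarith
      linarith
  linarith

lemma chern1 (n : ℕ) {p e q : ℝ} (he : 0 < e) (hq0 : 0 ≤ q) (hqp : q ≤ p) :
    Real.exp (-(Real.log (1 + e) * (n * q + e * (n * p)))) * (1 + q * e) ^ n ≤
      Real.exp (-(e ^ 2 / (2 + e)) * (n * p)) := by
  have hn : (0 : ℝ) ≤ n := Nat.cast_nonneg n
  have h1 : (1 + q * e) ^ n ≤ Real.exp (n * (q * e)) := by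
    rw [Real.exp_nat_mul]
    exact pow_le_pow_left₀ (by positivity) (by linarith [Real.add_one_le_exp (q * e)]) n
  refine (mul_le_mul_of_nonneg_left h1 (Real.exp_pos _).le).trans ?_
  rw [← Real.exp_add, Real.exp_le_exp]
  have hlo := Real.le_log_one_add_of_nonneg he.le
  have hhi : Real.log (1 + e) ≤ e := by
    have := Real.log_le_sub_one_of_pos (x := 1 + e) (by linarith)
    linarith
  set θ := Real.log (1 + e)
  have h2 : n * q * (e - θ) ≤ n * p * (e - θ) :=
    mul_le_mul_of_nonneg_right (mul_le_mul_of_nonneg_left hqp hn) (by linarith)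
  have h3 : e - (1 + e) * θ ≤ -(e ^ 2 / (2 + e)) := by
    have : (1 + e) * (2 * e / (e + 2)) ≤ (1 + e) * θ :=
      mul_le_mul_of_nonneg_left hlo (by linarith)
    have h : (1 + e) * (2 * e / (e + 2)) = e + e ^ 2 / (2 + e) := by field_simp; ring
    linarith
  have hnp : 0 ≤ (n : ℝ) * p := mul_nonneg hn (hq0.trans hqp)
  have h4 := mul_le_mul_of_nonneg_right h3 hnp
  nlinarith

lemma chern2 (n : ℕ) {p e q : ℝ} (he : 0 < e) (hq0 : 0 ≤ q) (hqp : q ≤ p) (hp1 : p < 1) :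
    Real.exp (Real.log (1 + e) * (n * q - e * (n * p))) * (1 + q * (-(e / (1 + e)))) ^ n ≤
      Real.exp (-(e ^ 2 / (2 + e)) * (n * p)) := by
  have hn : (0 : ℝ) ≤ n := Nat.cast_nonneg n
  have hx1 : e / (1 + e) ≤ 1 := by rw [div_le_one (by linarith)]; linarith
  have hx0 : 0 ≤ e / (1 + e) := by positivity
  have hsinh : Real.log (1 + e) - e / (1 + e) ≤ e - Real.log (1 + e) := by
    have hθ : 0 ≤ Real.log (1 + e) := Real.log_nonneg (by linarith)
    have := Real.self_le_sinh_iff.2 hθ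
    rw [Real.sinh_eq, Real.exp_neg, Real.exp_log (by linarith)] at this
    have h : (1 + e)⁻¹ = 1 - e / (1 + e) := by field_simp; ring
    rw [h] at this
    linarith
  set x := e / (1 + e)
  have h1 : (1 + q * (-x)) ^ n ≤ Real.exp (n * (q * (-x))) := by
    rw [Real.exp_nat_mul]
    exact pow_le_pow_left₀ (by nlinarith) (by linarith [Real.add_one_le_exp (q * (-x))]) n
  refine (mul_le_mul_of_nonneg_left h1 (Real.exp_pos _).le).trans ?_
  rw [← Real.exp_add, Real.exp_le_exp]
  have hlo := Real.le_log_one_add_of_nonneg he.le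
  have hhi : Real.log (1 + e) ≤ e := by
    have := Real.log_le_sub_one_of_pos (x := 1 + e) (by linarith)
    linarith
  set θ := Real.log (1 + e)
  have h2 : n * q * (e - θ) ≤ n * p * (e - θ) :=
    mul_le_mul_of_nonneg_right (mul_le_mul_of_nonneg_left hqp hn) (by linarith)
  have h2' : n * q * (θ - x) ≤ n * q * (e - θ) :=
    mul_le_mul_of_nonneg_left hsinh (mul_nonneg hn hq0)
  have h3 : e - (1 + e) * θ ≤ -(e ^ 2 / (2 + e)) := by
    have : (1 + e) * (2 * e / (e + 2)) ≤ (1 + e) * θ :=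
      mul_le_mul_of_nonneg_left hlo (by linarith)
    have h : (1 + e) * (2 * e / (e + 2)) = e + e ^ 2 / (2 + e) := by field_simp; ring
    linarith
  have hnp : 0 ≤ (n : ℝ) * p := mul_nonneg hn (hq0.trans hqp)
  have h4 := mul_le_mul_of_nonneg_right h3 hnp
  nlinarith

lemma TG_le (n : ℕ) {p e : ℝ} (hp0 : 0 < p) (hp1 : p < 1) (he : 0 < e) (m : ℕ)
    (l : ℕ → ℕ) (hl : FS l) (hln : ∑ᶠ i, l i = n) :
    (T p ^ m) (G n p e m) l ≤
      2 * m * Real.exp (-(e ^ 2 / (2 + e)) * (n * p)) + n * (1 - p) ^ m := by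
  have h1p : 0 ≤ 1 - p := by linarith
  have e1 : (T p ^ m) (G n p e m) l = ∑ i ∈ Finset.range m,
      (ga n p e i * (1 + p * (1 - p) ^ i * e) ^ n
        + gb n p e i * (1 + p * (1 - p) ^ i * (-(e / (1 + e)))) ^ n)
      + (1 - (1 - (1 - p) ^ m) ^ n) := by
    unfold G
    simp only [map_add, map_sub, map_sum, map_smul, Pi.add_apply, Pi.sub_apply,
      Finset.sum_apply, Pi.smul_apply, smul_eq_mul]
    congr 1
    · refine Finset.sum_congr rfl fun i hi => ?_
      rw [Tpow_H p _ m l hl, Tpow_H p _ m l hl, A_sg _ _ _ _ (Finset.mem_range.1 hi),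
        A_sg _ _ _ _ (Finset.mem_range.1 hi), H_const _ hl, H_const _ hl, hln]
    · rw [Tpow_H p _ m l hl, Tpow_H p _ m l hl, A_const, A_tl, H_const _ hl, H_const _ hl, hln,
        one_pow, mul_one]
  rw [e1]
  have e2 : ∀ i, ga n p e i * (1 + p * (1 - p) ^ i * e) ^ n
        + gb n p e i * (1 + p * (1 - p) ^ i * (-(e / (1 + e)))) ^ n ≤
        2 * Real.exp (-(e ^ 2 / (2 + e)) * (n * p)) := by
    intro i
    have hq0 : 0 ≤ p * (1 - p) ^ i := mul_nonneg hp0.le (pow_nonneg h1p i)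
    have hqp : p * (1 - p) ^ i ≤ p :=
      mul_le_of_le_one_right hp0.le (pow_le_one₀ h1p (by linarith))
    have a1 := chern1 n he hq0 hqp
    have a2 := chern2 n he hq0 hqp hp1
    unfold ga gb
    linarith
  have e3 := Finset.sum_le_sum fun i (_ : i ∈ Finset.range m) => e2 i
  rw [Finset.sum_const, Finset.card_range, nsmul_eq_mul] at e3
  have e4 := one_add_mul_le_pow (a := -(1 - p) ^ m)
    (by have := pow_le_one₀ h1p (by linarith : 1 - p ≤ 1) (n := m); linarith) n
  have e5 : (1 - (1 - p) ^ m) ^ n = (1 + -(1 - p) ^ m) ^ n := by rw [sub_eq_add_neg]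
  rw [e5]
  linarith

lemma bad_bound {n : ℕ} {p e : ℝ} (hp0 : 0 < p) (hp1 : p < 1) (he : 0 < e) (m : ℕ)
    (hm : (1 - p) ^ m ≤ e) {π : (ℕ → ℕ) → ℝ} (hpos : ∀ l, 0 ≤ π l)
    (htot : ∑ᶠ l ∈ {l : ℕ → ℕ | IsPartitionOf n l}, π l = 1)
    (hs : ∀ l', IsPartitionOf n l' →
      ∑ᶠ l ∈ {l : ℕ → ℕ | IsPartitionOf n l}, π l * stepProb p l l' = π l') :
    ∑ l ∈ (part_finite n).toFinset, π l * bad n p e l ≤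
      2 * m * Real.exp (-(e ^ 2 / (2 + e)) * (n * p)) + n * (1 - p) ^ m := by
  rw [stat_pow hs (bad_sym n p e) m]
  rw [finsum_mem_eq_finite_toFinset_sum _ (part_finite n)] at htot
  have key : ∀ l ∈ (part_finite n).toFinset, π l * (T p ^ m) (bad n p e) l ≤
      π l * (2 * m * Real.exp (-(e ^ 2 / (2 + e)) * (n * p)) + n * (1 - p) ^ m) := by
    intro l hl
    refine mul_le_mul_of_nonneg_left ?_ (hpos l)
    have hl1 : IsPartitionOf n l := by simpa using hl
    exact (Tpow_mono hp0.le hp1.le m (bad_le_G n hp0 hp1 he m hm) l hl1.1.1).trans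
      (TG_le n hp0 hp1 he m l hl1.1.1 hl1.1.2)
  refine (Finset.sum_le_sum key).trans (le_of_eq ?_)
  rw [← Finset.sum_mul, htot, one_mul]

lemma approx {p : ℝ} (hp0 : 0 < p) (hp1 : p < 1) {x : ℝ} (hx : 0 ≤ x) :
    |(1 - p) ^ ⌊1 / p * x⌋₊ - Real.exp (-x)| ≤ p / (1 - p) := by
  set k := ⌊1 / p * x⌋₊ with hk
  have h1p : 0 < 1 - p := by linarith
  have hk1 : p * k ≤ x := by
    have := Nat.floor_le (a := 1 / p * x) (by positivity)
    rw [← hk, one_div, inv_mul_eq_div, le_div_iff₀ hp0] at this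
    linarith
  have hk2 : x < p * k + p := by
    have := Nat.lt_floor_add_one (1 / p * x)
    rw [← hk, one_div, inv_mul_eq_div, div_lt_iff₀ hp0] at this
    linarith
  have hup : (1 - p) ^ k ≤ Real.exp (-(p * k)) := by
    have : Real.exp (-(p * k)) = Real.exp (-p) ^ k := by rw [← Real.exp_nat_mul]; ring_nf
    rw [this]
    exact pow_le_pow_left₀ h1p.le (Real.one_sub_le_exp_neg p) k
  have hexp : Real.exp p ≤ 1 + p / (1 - p) := by
    have h := Real.one_sub_le_exp_neg p
    rw [Real.exp_neg, le_inv_comm₀ h1p (Real.exp_pos _)] at h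
    have : (1 - p)⁻¹ = 1 + p / (1 - p) := by field_simp; ring
    linarith
  have hlow : Real.exp (-(p * k)) * (1 - p * k * (p / (1 - p))) ≤ (1 - p) ^ k := by
    have h1 : Real.exp (-(p / (1 - p))) ≤ 1 - p := by
      rw [Real.exp_neg, inv_le_comm₀ (Real.exp_pos _) h1p]
      have := Real.add_one_le_exp (p / (1 - p))
      have h : (1 - p)⁻¹ = 1 + p / (1 - p) := by field_simp; ring
      linarith
    have h2 := pow_le_pow_left₀ (Real.exp_pos _).le h1 k
    refine le_trans ?_ h2
    rw [← Real.exp_nat_mul]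
    have h3 : (k : ℝ) * -(p / (1 - p)) = -(p * k) + -(p * k * (p / (1 - p))) := by
      field_simp; ring
    rw [h3, Real.exp_add]
    exact mul_le_mul_of_nonneg_left (Real.one_sub_le_exp_neg _) (Real.exp_pos _).le
  have hη : 0 ≤ p / (1 - p) := by positivity
  rw [abs_le]
  constructor
  · have h1 : Real.exp (-x) ≤ Real.exp (-(p * k)) := Real.exp_le_exp.2 (by linarith)
    have h2 : Real.exp (-(p * k)) * (p * k) ≤ 1 := by
      rw [Real.exp_neg, inv_mul_le_iff₀ (Real.exp_pos _)]
      linarith [Real.add_one_le_exp (p * k)]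
    have h3 := mul_le_mul_of_nonneg_right h2 hη
    linarith
  · have h1 : Real.exp (-(p * k)) ≤ Real.exp (-x) * Real.exp p := by
      rw [← Real.exp_add]; exact Real.exp_le_exp.2 (by linarith)
    have h2 : Real.exp (-x) ≤ 1 := Real.exp_le_one_iff.2 (by linarith)
    have h3 : Real.exp (-x) * Real.exp p ≤ Real.exp (-x) * (1 + p / (1 - p)) :=
      mul_le_mul_of_nonneg_left hexp (Real.exp_pos _).le
    have h4 := mul_le_mul_of_nonneg_right h2 hη
    linarith

lemma shape {n : ℕ} (hn : 0 < n) {p e ε : ℝ} (hp0 : 0 < p) (hp1 : p < 1)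
    (hε : e + p / (1 - p) ≤ ε)
    {l : ℕ → ℕ} (hl : IsPartitionOf n l) (hb : bad n p e l = 0) :
    (⨆ x : NNReal, |rescaledBoundary n (1 / p) l x - Real.exp (-(x : ℝ))|) ≤ ε := by
  have hgood : ∀ k, |(ordC l k : ℝ) - n * p * (1 - p) ^ k| ≤ e * (n * p) := by
    by_contra hcon
    rw [bad, if_neg hcon] at hb
    exact one_ne_zero hb
  rw [ordC_of_antitone hl.1.1 hl.2] at hgood
  have hn' : (0 : ℝ) < n := by exact_mod_cast hn
  refine ciSup_le fun x => ?_
  have h1 := approx hp0 hp1 x.2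
  have h2 := hgood ⌊1 / p * (x : ℝ)⌋₊
  unfold rescaledBoundary
  change |(1 - p) ^ ⌊1 / p * (x : ℝ)⌋₊ - Real.exp (-(x : ℝ))| ≤ _ at h1
  set k := ⌊1 / p * (x : ℝ)⌋₊
  have h3 : |1 / p / n * (l k : ℝ) - (1 - p) ^ k| ≤ e := by
    have : 1 / p / n * (l k : ℝ) - (1 - p) ^ k = ((l k : ℝ) - n * p * (1 - p) ^ k) / (n * p) := by
      field_simp
    rw [this, abs_div, abs_of_pos (by positivity : 0 < (n : ℝ) * p), div_le_iff₀ (by positivity)]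
    exact h2
  have := abs_sub_le (1 / p / n * (l k : ℝ)) ((1 - p) ^ k) (Real.exp (-(x : ℝ)))
  linarith

lemma final_bound {n : ℕ} (hn : 0 < n) {p e ε : ℝ} (hp0 : 0 < p) (hp1 : p < 1)
    (hε : e + p / (1 - p) ≤ ε) (he : 0 < e) (m : ℕ)
    (hm : (1 - p) ^ m ≤ e) {π : (ℕ → ℕ) → ℝ} (hpos : ∀ l, 0 ≤ π l)
    (htot : ∑ᶠ l ∈ {l : ℕ → ℕ | IsPartitionOf n l}, π l = 1)
    (hs : ∀ l', IsPartitionOf n l' →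
      ∑ᶠ l ∈ {l : ℕ → ℕ | IsPartitionOf n l}, π l * stepProb p l l' = π l') :
    1 - (2 * m * Real.exp (-(e ^ 2 / (2 + e)) * (n * p)) + n * (1 - p) ^ m) ≤
      ∑ᶠ l ∈ {l : ℕ → ℕ | IsPartitionOf n l ∧
          (⨆ x : NNReal,
            |rescaledBoundary n (1 / p) l x - Real.exp (-(x : ℝ))|) ≤ ε}, π l := by
  classical
  have hb := bad_bound hp0 hp1 he m hm hpos htot hs
  rw [finsum_mem_eq_finite_toFinset_sum _ (part_finite n)] at htot
  have hfin : {l : ℕ → ℕ | IsPartitionOf n l ∧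
          (⨆ x : NNReal,
            |rescaledBoundary n (1 / p) l x - Real.exp (-(x : ℝ))|) ≤ ε}.Finite :=
    (part_finite n).subset fun l hl => hl.1
  rw [finsum_mem_eq_finite_toFinset_sum _ hfin]
  have h1 : ∑ l ∈ (part_finite n).toFinset, (π l - π l * bad n p e l) ≤
      ∑ l ∈ hfin.toFinset, π l := by
    have hsub : hfin.toFinset ⊆ (part_finite n).toFinset := by
      intro l hl
      have : l ∈ {l : ℕ → ℕ | IsPartitionOf n l ∧
          (⨆ x : NNReal,
            |rescaledBoundary n (1 / p) l x - Real.exp (-(x : ℝ))|) ≤ ε} := hfin.mem_toFinset.1 hl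
      exact (part_finite n).mem_toFinset.2 this.1
    have hle : ∀ l ∈ (part_finite n).toFinset, π l - π l * bad n p e l ≤
        if l ∈ hfin.toFinset then π l else 0 := by
      intro l hl
      have hl1 : IsPartitionOf n l := by simpa using hl
      have hb01 : bad n p e l = 0 ∨ bad n p e l = 1 := by
        unfold bad; split_ifs <;> simp
      rcases hb01 with h0 | h0
      · have : l ∈ hfin.toFinset := hfin.mem_toFinset.2 ⟨hl1, shape hn hp0 hp1 hε hl1 h0⟩
        rw [if_pos this, h0]
        linarith
      · rw [h0]
        split_ifs
        · linarith [hpos l]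
        · linarith
    refine (Finset.sum_le_sum hle).trans (le_of_eq ?_)
    rw [← Finset.sum_subset hsub (fun l _ hl => if_neg hl)]
    exact Finset.sum_congr rfl fun l hl => if_pos hl
  rw [Finset.sum_sub_distrib] at h1
  linarith
end SBS

/-- The stationary distribution of the card-based stochastic Bulgarian solitaire has the
limit shape `e^{-x}` with scaling `1/p`, with the stated bound on the probability of
deviation. -/
theorem stationary_measure_limit_shape
    (p : ℕ → ℝ) (hp : ∀ n, 0 < p n ∧ p n < 1)
    (hp0 : Tendsto p atTop (nhds 0))
    (hplog : Tendsto (fun n => p n / (Real.log n / n)) atTop atTop)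
    (π : ℕ → (ℕ → ℕ) → ℝ)
    (hπ_nonneg : ∀ n l, 0 ≤ π n l)
    (hπ_supp : ∀ n l, ¬ IsPartitionOf n l → π n l = 0)
    (hπ_total : ∀ n, 0 < n → ∑ᶠ l ∈ {l : ℕ → ℕ | IsPartitionOf n l}, π n l = 1)
    (hπ_stat : ∀ n, 0 < n → ∀ l', IsPartitionOf n l' →
      ∑ᶠ l ∈ {l : ℕ → ℕ | IsPartitionOf n l}, π n l * stepProb (p n) l l' = π n l') :
    ∀ ε δ : ℝ, 0 < ε → 0 < δ → δ < 1 → ∃ N : ℕ, ∀ n, N ≤ n →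
      1 - Real.exp (-(ε ^ 2 / (2 + ε)) * n * p n * (1 - δ)) ≤
        ∑ᶠ l ∈ {l : ℕ → ℕ | IsPartitionOf n l ∧
          (⨆ x : NNReal,
            |rescaledBoundary n (1 / p n) l x - Real.exp (-(x : ℝ))|) ≤ ε}, π n l := by
  intro ε δ hε hδ0 hδ1
  obtain ⟨e, he_def⟩ : ∃ e, e = ε * (1 - δ / 2) := ⟨_, rfl⟩
  obtain ⟨a, ha_def⟩ : ∃ a, a = ε ^ 2 / (2 + ε) := ⟨_, rfl⟩
  obtain ⟨a', ha'_def⟩ : ∃ a', a' = e ^ 2 / (2 + e) := ⟨_, rfl⟩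
  have he : 0 < e := by rw [he_def]; exact mul_pos hε (by linarith)
  have heε : e ≤ ε := by rw [he_def]; nlinarith
  have ha : 0 < a := by rw [ha_def]; positivity
  have haa : a * (1 - δ) + a * δ ^ 2 / 4 ≤ a' := by
    have h1 : e ^ 2 / (2 + ε) ≤ a' := by
      rw [ha'_def]
      exact div_le_div_of_nonneg_left (by positivity) (by positivity) (by linarith)
    have h2 : e ^ 2 / (2 + ε) = a * (1 - δ) + a * δ ^ 2 / 4 := by
      rw [he_def, ha_def]; field_simp; ring
    linarith
  obtain ⟨C, hC⟩ := exists_nat_ge (max a' 1)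
  have hC1 : (1 : ℝ) ≤ C := (le_max_right _ _).trans hC
  have hCa : a' ≤ C := (le_max_left _ _).trans hC
  obtain ⟨K, hK_def⟩ : ∃ K, K = 1 + 8 / (a * δ ^ 2) := ⟨_, rfl⟩
  have hK1 : 1 ≤ K := by rw [hK_def]; have : 0 ≤ 8 / (a * δ ^ 2) := by positivity
                         linarith
  have hK2 : 2 ≤ K * (a * δ ^ 2 / 4) := by
    have : K * (a * δ ^ 2 / 4) = a * δ ^ 2 / 4 + 2 := by
      rw [hK_def]; field_simp; ring
    have : 0 ≤ a * δ ^ 2 / 4 := by positivity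
    linarith
  have ev1 : ∀ᶠ n in atTop, p n < min (1 / 2) (ε * δ / 4) :=
    hp0.eventually_lt_const (by positivity)
  have ev2 : ∀ᶠ n in atTop, K ≤ p n / (Real.log n / n) := hplog.eventually_ge_atTop K
  obtain ⟨N1, hN1⟩ := exists_nat_ge (1 / e)
  obtain ⟨N, hN⟩ := eventually_atTop.1 (ev1.and (ev2.and (eventually_ge_atTop (2 + 2 * C + 1 + N1))))
  refine ⟨N, fun n hn => ?_⟩
  obtain ⟨c1, c2, c3⟩ := hN n hn
  obtain ⟨hq0, hq1⟩ := hp n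
  have c1a := c1.trans_le (min_le_left _ _)
  have c1b := c1.trans_le (min_le_right _ _)
  have hn0 : 0 < n := by omega
  have hnR : (0 : ℝ) < n := by exact_mod_cast hn0
  have hn2 : (1 : ℝ) < n := by exact_mod_cast (by omega : 1 < n)
  have hnC : 2 * (C : ℝ) + 1 ≤ n := by exact_mod_cast (by omega : 2 * C + 1 ≤ n)
  have hnN : (N1 : ℝ) ≤ n := by exact_mod_cast (by omega : N1 ≤ n)
  have hL : 0 < Real.log n := Real.log_pos hn2
  have hx : K * Real.log n ≤ n * p n := by
    rw [le_div_iff₀ (by positivity)] at c2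
    have := mul_le_mul_of_nonneg_right c2 hnR.le
    have h : K * (Real.log n / n) * n = K * Real.log n := by field_simp
    linarith
  have hx1 : Real.log n ≤ n * p n := by nlinarith
  have hx0 : 0 ≤ n * p n := by positivity
  have hpow : (1 - p n) ^ (C * n) ≤ Real.exp (-(C * (n * p n))) := by
    have : Real.exp (-(C * (n * p n))) = Real.exp (-p n) ^ (C * n) := by
      rw [← Real.exp_nat_mul]; push_cast; ring_nf
    rw [this]
    exact pow_le_pow_left₀ (by linarith) (Real.one_sub_le_exp_neg _) _
  have hm : (1 - p n) ^ (C * n) ≤ e := by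
    refine hpow.trans ?_
    have h1 : Real.exp (-(C * (n * p n))) ≤ Real.exp (-Real.log n) :=
      Real.exp_le_exp.2 (by nlinarith)
    rw [Real.exp_neg (Real.log n), Real.exp_log hnR] at h1
    refine h1.trans ?_
    rw [inv_le_comm₀ hnR he, ← one_div]
    linarith
  have hη : e + p n / (1 - p n) ≤ ε := by
    have : p n / (1 - p n) ≤ 2 * p n := by
      rw [div_le_iff₀ (by linarith)]; nlinarith
    rw [he_def]
    linarith
  have main := SBS.final_bound hn0 hq0 hq1 hη he (C * n) hm (hπ_nonneg n) (hπ_total n hn0)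
    (hπ_stat n hn0)
  refine le_trans ?_ main
  rw [← ha_def, ← ha'_def]
  have t1 : n * (1 - p n) ^ (C * n) ≤ n * Real.exp (-a' * (n * p n)) := by
    refine mul_le_mul_of_nonneg_left (hpow.trans (Real.exp_le_exp.2 ?_)) hnR.le
    nlinarith
  have t2 : (2 * C + 1) * n * Real.exp (-a' * (n * p n)) ≤
      Real.exp (-a * n * p n * (1 - δ)) := by
    have s1 : (2 * C + 1) * n ≤ Real.exp (a * δ ^ 2 / 4 * (n * p n)) := by
      have r1 : (2 * C + 1) * (n : ℝ) ≤ Real.exp (2 * Real.log n) := by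
        rw [two_mul (Real.log n), Real.exp_add, Real.exp_log hnR]
        exact mul_le_mul_of_nonneg_right hnC hnR.le
      refine r1.trans (Real.exp_le_exp.2 ?_)
      have r2 := mul_le_mul_of_nonneg_right hK2 hL.le
      have r3 := mul_le_mul_of_nonneg_left hx (by positivity : 0 ≤ a * δ ^ 2 / 4)
      linarith
    refine (mul_le_mul_of_nonneg_right s1 (Real.exp_pos _).le).trans ?_
    rw [← Real.exp_add, Real.exp_le_exp]
    have := mul_le_mul_of_nonneg_right haa hx0
    linarith
  push_cast
  linarith
end
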